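/- A discrete group G is C*-simple if and only if every G-boundary contained in the dual space C*_λ(G)* is a singleton {φ} with φ a scalar multiple of the canonical tracial state τ_λ. -/

import Mathlib

noncomputable section
open scoped ENNReal ComplexOrder lp
open MeasureTheory
set_option maxHeartbeats 1000000
set_option synthInstance.maxHeartbeats 1000000

universe u

variable {G : Type u} [Group G]

theorem translat_mem (g : G) (f : ℓ²(G, ℂ)) : Memℓp (fun h => f (g⁻¹ * h)) 2 := by
  have hf : Summable fun i : G => ‖f i‖ ^ (2 : ℝ≥0∞).toReal :=
    (memℓp_gen_iff (by norm_num)).1 (lp.memℓp f)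
  exact memℓp_gen ((Equiv.mulLeft g⁻¹).summable_iff.2 hf)

/-- The left regular representation of `g ∈ G` as a linear isometric bijection of `ℓ²(G)`,
given by `(λ_g ξ)(h) = ξ(g⁻¹ h)`. -/
def lregE (g : G) : ℓ²(G, ℂ) ≃ₗᵢ[ℂ] ℓ²(G, ℂ) :=
{ toFun := fun f => ⟨fun h => f (g⁻¹ * h), translat_mem g f⟩
  invFun := fun f => ⟨fun h => f (g * h), by
    have := translat_mem g⁻¹ f; simp only [inv_inv] at this; exact this⟩
  map_add' := by intro f₁ f₂; ext h; simp [lp.coeFn_add]; rfl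
  map_smul' := by intro c f; ext h; simp [lp.coeFn_smul]
  left_inv := by intro f; ext h; simp
  right_inv := by intro f; ext h; simp
  norm_map' := by
    intro f
    rw [lp.norm_eq_tsum_rpow (by norm_num) f, lp.norm_eq_tsum_rpow (by norm_num)]
    congr 1
    exact (Equiv.mulLeft g⁻¹).tsum_eq (fun h => ‖f h‖ ^ (2 : ℝ≥0∞).toReal) }

/-- The left regular representation `λ` as bounded operators on `ℓ²(G)`. -/
def lreg (g : G) : ℓ²(G, ℂ) →L[ℂ] ℓ²(G, ℂ) :=
  (lregE g).toContinuousLinearEquiv.toContinuousLinearMap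

variable (G) in
/-- The reduced group C*-algebra `C*_λ(G)`: the norm-closed star subalgebra of the algebra of
bounded operators on `ℓ²(G)` generated by the image of the left regular representation. -/
def redCstar : StarSubalgebra ℂ (ℓ²(G, ℂ) →L[ℂ] ℓ²(G, ℂ)) :=
  (StarAlgebra.adjoin ℂ (Set.range (lreg (G := G)))).topologicalClosure

/-- `λ_g` as an element of the reduced group C*-algebra. -/
def uu (g : G) : redCstar G :=
  ⟨lreg g, StarSubalgebra.le_topologicalClosure _ (StarAlgebra.subset_adjoin ℂ _ ⟨g, rfl⟩)⟩

variable (G) in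
/-- `G` is C*-simple: `C*_λ(G)` has no closed two-sided ideals other than `{0}` and the
whole algebra. -/
def IsCstarSimple : Prop :=
  ∀ I : TwoSidedIdeal (redCstar G), IsClosed (I : Set (redCstar G)) → I = ⊥ ∨ I = ⊤

/-- The vector `δ_e ∈ ℓ²(G)`. -/
def deltaOne : ℓ²(G, ℂ) := letI := Classical.decEq G; lp.single 2 (1 : G) 1

variable (G) in
/-- The canonical tracial state `τ_λ(a) = ⟨a δ_e, δ_e⟩` on the reduced C*-algebra, as a
weak* continuous linear functional. -/
def tau : WeakDual ℂ (redCstar G) :=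
  (innerSL ℂ (deltaOne (G := G))).comp
    ((ContinuousLinearMap.apply ℂ ℓ²(G, ℂ) (deltaOne (G := G))).comp
      { toLinearMap := (redCstar G).subtype.toLinearMap, cont := continuous_subtype_val })

attribute [irreducible] redCstar lreg lregE deltaOne uu tau

/-- The action of `G` on the dual of `C*_λ(G)`: `(g·φ)(a) = φ(λ_g⁻¹ a λ_g)`. -/
def dualAct (g : G) (φ : WeakDual ℂ (redCstar G)) : WeakDual ℂ (redCstar G) :=
{ toFun := fun a => φ (uu g⁻¹ * a * uu g)
  map_add' := by
    intro a b
    show φ (uu g⁻¹ * (a + b) * uu g) = φ (uu g⁻¹ * a * uu g) + φ (uu g⁻¹ * b * uu g)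
    rw [mul_add, add_mul, map_add]
  map_smul' := by
    intro c a
    show φ (uu g⁻¹ * (c • a) * uu g) = c • φ (uu g⁻¹ * a * uu g)
    rw [mul_smul_comm, smul_mul_assoc, _root_.map_smul]
  cont := (map_continuous φ).comp
      ((continuous_const.mul continuous_id).mul continuous_const) }

theorem dualAct_continuous (g : G) : Continuous (dualAct (G := G) g) := by
  apply WeakDual.continuous_of_continuous_eval
  intro a
  exact WeakDual.eval_continuous (uu g⁻¹ * a * uu g)

variable (G) in
/-- A `G`-boundary in the dual space of `C*_λ(G)`: a weak* compact `G`-invariant set of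
functionals such that every point mass lies in the weak* closure of the `G`-orbit of every
regular Borel probability measure on it. -/
def IsDualBoundary (B : Set (WeakDual ℂ (redCstar G))) : Prop :=
  B.Nonempty ∧ IsCompact B ∧
  ∃ hinv : ∀ (g : G) (φ : WeakDual ℂ (redCstar G)), φ ∈ B → dualAct g φ ∈ B,
  letI : MeasurableSpace B := borel B
  haveI : BorelSpace B := ⟨rfl⟩
  ∀ (μ : ProbabilityMeasure B) (x : B),
    (⟨Measure.dirac x, Measure.dirac.isProbabilityMeasure⟩ : ProbabilityMeasure B) ∈
      closure {ν : ProbabilityMeasure B | ∃ g : G,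
        ν = μ.map (f := fun y => (⟨dualAct g y.1, hinv g y.1 y.2⟩ : B))
          ((((dualAct_continuous g).comp continuous_subtype_val).subtype_mk
            (fun y => hinv g y.1 y.2)).measurable.aemeasurable)}

section Work

set_option linter.all false
set_option linter.deprecated false

section ConvexDynamics

/-- A normalised positive linear functional on an ordered vector space with unit `e`. -/
def IsSt {V : Type*} [AddCommGroup V] [Module ℝ V] [PartialOrder V] (e : V) (ν : V → ℝ) : Prop :=
  (∀ f g, ν (f + g) = ν f + ν g) ∧ (∀ (c : ℝ) f, ν (c • f) = c * ν f) ∧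
    (∀ f, 0 ≤ f → 0 ≤ ν f) ∧ ν e = 1

section St
variable {V : Type*} [AddCommGroup V] [Module ℝ V] [PartialOrder V] [IsOrderedAddMonoid V] {e : V}

theorem IsSt.sub {ν : V → ℝ} (h : IsSt e ν) (f g : V) : ν (f - g) = ν f - ν g := by
  have := h.1 (f - g) g
  rw [sub_add_cancel] at this
  linarith

theorem IsSt.mono {ν : V → ℝ} (h : IsSt e ν) {f g : V} (hfg : f ≤ g) : ν f ≤ ν g := by
  have := h.2.2.1 (g - f) (sub_nonneg.2 hfg)
  rw [h.sub] at this
  linarith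

theorem IsSt.neg {ν : V → ℝ} (h : IsSt e ν) (f : V) : ν (-f) = - ν f := by
  have := h.2.1 (-1) f
  simpa using this

theorem IsSt.sum {ν : V → ℝ} (h : IsSt e ν) {ι : Type*} (T : Finset ι) (f : ι → V) :
    ν (∑ i ∈ T, f i) = ∑ i ∈ T, ν (f i) := by
  let L : V →+ ℝ := AddMonoidHom.mk' ν h.1
  exact map_sum L f T

theorem isClosed_isSt (e : V) : IsClosed {ν : V → ℝ | IsSt e ν} := by
  simp only [IsSt, Set.setOf_and, Set.setOf_forall]
  refine IsClosed.inter (isClosed_iInter fun f => isClosed_iInter fun g => ?_)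
    (IsClosed.inter (isClosed_iInter fun c => isClosed_iInter fun f => ?_)
    (IsClosed.inter (isClosed_iInter fun f => isClosed_iInter fun hf => ?_) ?_))
  · exact isClosed_eq (by fun_prop) (by fun_prop)
  · exact isClosed_eq (by fun_prop) (by fun_prop)
  · exact isClosed_le (by fun_prop) (by fun_prop)
  · exact isClosed_eq (by fun_prop) (by fun_prop)

theorem isCompact_isSt (e : V) (hb : ∀ f : V, ∃ C : ℝ, f ≤ C • e ∧ -f ≤ C • e) :
    IsCompact {ν : V → ℝ | IsSt e ν} := by
  choose C hC using hb
  refine IsCompact.of_isClosed_subset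
    (isCompact_univ_pi (fun f : V => isCompact_Icc (a := -(C f)) (b := C f)))
    (isClosed_isSt e) ?_
  intro ν hν f _
  have hν : IsSt e ν := hν
  have h1 := hν.mono (hC f).1
  have h2 := hν.mono (hC f).2
  rw [hν.2.1, hν.2.2.2] at h1 h2
  rw [hν.neg] at h2
  constructor <;> linarith

theorem convex_isSt (e : V) : Convex ℝ {ν : V → ℝ | IsSt e ν} := by
  intro ν hν μ hμ a b ha hb hab
  obtain ⟨h1, h2, h3, h4⟩ := hν
  obtain ⟨k1, k2, k3, k4⟩ := hμ
  refine ⟨fun f g => ?_, fun c f => ?_, fun f hf => ?_, ?_⟩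
  · simp only [Pi.add_apply, Pi.smul_apply, smul_eq_mul, h1, k1]; ring
  · simp only [Pi.add_apply, Pi.smul_apply, smul_eq_mul, h2, k2]; ring
  · have := h3 f hf
    have := k3 f hf
    simp only [Pi.add_apply, Pi.smul_apply, smul_eq_mul]; positivity
  · simp only [Pi.add_apply, Pi.smul_apply, smul_eq_mul, h4, k4]; linarith

end St

theorem cont_bdd {X : Type*} [TopologicalSpace X] [CompactSpace X] (f : C(X, ℝ)) :
    f ≤ ‖f‖ • (1 : C(X, ℝ)) ∧ -f ≤ ‖f‖ • (1 : C(X, ℝ)) := by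
  constructor
  · intro x
    have := (abs_le.1 (f.norm_coe_le_norm x)).2
    simpa using this
  · intro x
    have := (abs_le.1 (f.norm_coe_le_norm x)).1
    simp; linarith

theorem IsSt.abs_le {X : Type*} [TopologicalSpace X] [CompactSpace X] {ν : C(X, ℝ) → ℝ}
    (h : IsSt 1 ν) (f : C(X, ℝ)) : |ν f| ≤ ‖f‖ := by
  have h1 := h.mono (cont_bdd f).1
  have h2 := h.mono (cont_bdd f).2
  rw [h.2.1, h.2.2.2] at h1 h2
  rw [h.neg] at h2
  rw [_root_.abs_le]
  constructor <;> linarith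

variable {E : Type*} [AddCommGroup E] [Module ℝ E] [TopologicalSpace E] [IsTopologicalAddGroup E]
  [ContinuousSMul ℝ E] [LocallyConvexSpace ℝ E] [T2Space E]

/-- restriction of a continuous functional to a subset -/
def resF (X : Set E) (l : E →L[ℝ] ℝ) : C(X, ℝ) := ⟨fun x => l x, by fun_prop⟩

/-- Existence of barycentres. -/
theorem exists_bary {K X : Set E} (hK : IsCompact K) (hcv : Convex ℝ K) (hKne : K.Nonempty)
    (hXK : X ⊆ K) [CompactSpace X] {ν : C(X, ℝ) → ℝ} (hν : IsSt 1 ν) :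
    ∃ b ∈ K, ∀ l : E →L[ℝ] ℝ, l b = ν (resF X l) := by
  classical
  have key : (K ∩ ⋂ l : E →L[ℝ] ℝ, {b | l b = ν (resF X l)}).Nonempty := by
    apply hK.inter_iInter_nonempty
    · intro l
      exact isClosed_eq (by fun_prop) (by fun_prop)
    · intro S
      let P : E →L[ℝ] (S → ℝ) := ContinuousLinearMap.pi fun l => (l : E →L[ℝ] ℝ)
      have hcomp : IsCompact (P '' K) := hK.image P.continuous
      have hconv : Convex ℝ (P '' K) := hcv.linear_image P.toLinearMap
      let v : S → ℝ := fun l => ν (resF X l)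
      have hv : v ∈ P '' K := by
        by_contra hv
        obtain ⟨F, u, h1, h2⟩ := geometric_hahn_banach_point_closed hconv hcomp.isClosed hv
        have hF : ∀ w : S → ℝ, F w = ∑ l, w l * F (Pi.single l 1) := by
          intro w
          conv_lhs => rw [pi_eq_sum_univ' w]
          simp [map_sum]
        let L : E →L[ℝ] ℝ := F.comp P
        have hL : resF X L = ∑ l : S, F (Pi.single l 1) • resF X (l : E →L[ℝ] ℝ) := by
          ext x
          have : L x = ∑ l : S, P x l * F (Pi.single l 1) := hF (P x)
          simp only [resF, ContinuousMap.coe_mk, this, ContinuousMap.coe_sum, Finset.sum_apply,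
            ContinuousMap.coe_smul, Pi.smul_apply, smul_eq_mul]
          exact Finset.sum_congr rfl fun l _ => mul_comm _ _
        have hν1 : ν (resF X L) = F v := by
          rw [hL, hν.sum, hF v]
          refine Finset.sum_congr rfl fun l _ => ?_
          rw [hν.2.1, mul_comm]
        have hle : (u • (1 : C(X, ℝ))) ≤ resF X L := by
          intro x
          have := h2 (P x) ⟨x, hXK x.2, rfl⟩
          simpa [resF, L] using this.le
        have := hν.mono hle
        rw [hν.2.1, hν.2.2.2, hν1] at this
        linarith
      obtain ⟨b, hb, hbv⟩ := hv
      refine ⟨b, hb, ?_⟩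
      simp only [Set.mem_iInter, Set.mem_setOf_eq]
      intro l hl
      exact congrFun hbv ⟨l, hl⟩
  obtain ⟨b, hb, h⟩ := key
  exact ⟨b, hb, fun l => by simpa using Set.mem_iInter.1 h l⟩

theorem ext_of_dual {x y : E} (h : ∀ l : E →L[ℝ] ℝ, l x = l y) : x = y := by
  by_contra hne
  obtain ⟨f, hf⟩ := geometric_hahn_banach_point_point hne
  exact hf.ne (h f)

/-- Bauer: a state whose barycentre is extreme is the point evaluation. -/
theorem bauer {K X : Set E} (hK : IsCompact K) (hcv : Convex ℝ K)
    (hXK : X ⊆ K) [CompactSpace X] {ν : C(X, ℝ) → ℝ} (hν : IsSt 1 ν) (x : X)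
    (hx : (x : E) ∈ K.extremePoints ℝ) (hb : ∀ l : E →L[ℝ] ℝ, l x = ν (resF X l))
    (f : C(X, ℝ)) : ν f = f x := by
  have hKne : K.Nonempty := ⟨x, hXK x.2⟩
  -- first: for `0 ≤ h ≤ 1`
  have step1 : ∀ h : C(X, ℝ), 0 ≤ h → 0 < ν h → ν h < 1 → h ≤ 1 → ∀ l : E →L[ℝ] ℝ,
      ν (h * resF X l) = l x * ν h := by
    intro h h0 hp hp1 h1 l
    have aux : ∀ k : C(X, ℝ), 0 ≤ k → 0 < ν k → IsSt 1 (fun f => (ν k)⁻¹ * ν (k * f)) := by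
      intro k hk hkp
      refine ⟨fun f g => ?_, fun c f => ?_, fun f hf => ?_, ?_⟩
      · show (ν k)⁻¹ * ν (k * (f + g)) = (ν k)⁻¹ * ν (k * f) + (ν k)⁻¹ * ν (k * g)
        rw [mul_add, hν.1]; ring
      · show (ν k)⁻¹ * ν (k * (c • f)) = c * ((ν k)⁻¹ * ν (k * f))
        rw [mul_smul_comm, hν.2.1]; ring
      · have := hν.2.2.1 (k * f) (fun z => mul_nonneg (hk z) (hf z))
        positivity
      · show (ν k)⁻¹ * ν (k * 1) = 1
        rw [mul_one]; field_simp
    have hν1 : ν (1 - h) = 1 - ν h := by rw [hν.sub, hν.2.2.2]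
    obtain ⟨b1, hb1, e1⟩ := exists_bary hK hcv hKne hXK (aux h h0 hp)
    obtain ⟨b2, hb2, e2⟩ := exists_bary hK hcv hKne hXK
      (aux (1 - h) (sub_nonneg.2 h1) (by rw [hν1]; linarith))
    have hseg : (x : E) ∈ openSegment ℝ b1 b2 := by
      refine ⟨ν h, 1 - ν h, hp, by linarith, by ring, ext_of_dual fun l => ?_⟩
      have hne : (1 - ν h) ≠ 0 := by linarith
      rw [map_add, map_smul, map_smul, e1, e2, hb, hν1, sub_mul, one_mul, hν.sub]
      simp only [smul_eq_mul]
      field_simp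
      ring
    have := (mem_extremePoints.1 hx).2 b1 hb1 b2 hb2 hseg
    have h3 := e1 l
    rw [this.1] at h3
    rw [h3]
    field_simp
  have step2 : ∀ h : C(X, ℝ), ∀ l : E →L[ℝ] ℝ, ν (h * resF X l) = l x * ν h := by
    intro h l
    -- normalise `h`
    set M : ℝ := ‖h‖ + 1 with hM
    have hMp : 0 < M := by positivity
    set k : C(X, ℝ) := (4 * M)⁻¹ • (h + (2 * M) • 1) with hk
    have hbd : ∀ z, |h z| ≤ M := fun z => (h.norm_coe_le_norm z).trans (by linarith)
    have hkz : ∀ z, 1/4 ≤ k z ∧ k z ≤ 3/4 := by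
      intro z
      have := _root_.abs_le.1 (hbd z)
      simp only [hk, ContinuousMap.coe_smul, ContinuousMap.coe_add, Pi.smul_apply, Pi.add_apply,
        ContinuousMap.coe_one, Pi.one_apply, smul_eq_mul]
      constructor
      · rw [inv_mul_eq_div, le_div_iff₀ (by positivity)]; linarith
      · rw [inv_mul_eq_div, div_le_iff₀ (by positivity)]; linarith
    have l1 : (1/4 : ℝ) ≤ ν k := by
      have : ((1/4 : ℝ) • (1 : C(X, ℝ))) ≤ k := fun z => by simpa using (hkz z).1
      have := hν.mono this
      rwa [hν.2.1, hν.2.2.2, mul_one] at this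
    have l2 : ν k ≤ 3/4 := by
      have : k ≤ ((3/4 : ℝ) • (1 : C(X, ℝ))) := fun z => by simpa using (hkz z).2
      have := hν.mono this
      rwa [hν.2.1 (3/4), hν.2.2.2, mul_one] at this
    have := step1 k (fun z => by have := (hkz z).1; simp; linarith) (by linarith) (by linarith)
      (fun z => by have := (hkz z).2; simp; linarith) l
    rw [hk, smul_mul_assoc, hν.2.1, hν.2.1, add_mul, hν.1, hν.1, smul_mul_assoc, one_mul, hν.2.1,
      hν.2.1, hν.2.2.2, ← hb] at this
    have h4 : (4 * M)⁻¹ ≠ 0 := by positivity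
    have h5 : (4 * M)⁻¹ * (ν (h * resF X l) + 2 * M * l x - l x * (ν h + 2 * M * 1)) = 0 := by
      linarith
    have := (mul_eq_zero.1 h5).resolve_left h4
    linarith
  -- Stone-Weierstrass
  have hcont : Continuous ν := by
    have hl : LipschitzWith 1 ν := LipschitzWith.of_dist_le_mul fun f g => by
      rw [Real.dist_eq, ← hν.sub, dist_eq_norm]
      simpa using hν.abs_le (f - g)
    exact hl.continuous
  let B : Subalgebra ℝ C(X, ℝ) :=
    { carrier := {h | ∀ k, ν (k * h) = h x * ν k}
      mul_mem' := by
        intro a b ha hb k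
        rw [← mul_assoc, hb, ha]; simp; ring
      add_mem' := by
        intro a b ha hb k
        rw [mul_add, hν.1, hb, ha]; simp; ring
      algebraMap_mem' := by
        intro r k
        have : k * algebraMap ℝ C(X, ℝ) r = r • k := by
          ext z; simp [mul_comm]
        rw [this, hν.2.1]; simp }
  have hBcl : IsClosed (B : Set C(X, ℝ)) := by
    have : (B : Set C(X, ℝ)) = ⋂ k, {h | ν (k * h) = h x * ν k} := by
      ext h; simp only [Set.mem_iInter]; rfl
    rw [this]
    refine isClosed_iInter fun k => isClosed_eq (by fun_prop) ?_
    exact (ContinuousEvalConst.continuous_eval_const x).mul continuous_const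
  have hsep : B.SeparatesPoints := by
    intro a b hab
    obtain ⟨F, hF⟩ := geometric_hahn_banach_point_point (fun h => hab (Subtype.ext h) : (a : E) ≠ b)
    exact ⟨resF X F, ⟨resF X F, fun k => step2 k F, rfl⟩, hF.ne⟩
  have htop := ContinuousMap.subalgebra_topologicalClosure_eq_top_of_separatesPoints B hsep
  have hfB : f ∈ B := by
    have : f ∈ B.topologicalClosure := by rw [htop]; trivial
    rw [← SetLike.mem_coe, Subalgebra.topologicalClosure_coe, hBcl.closure_eq] at this
    exact this
  have := hfB 1
  rwa [one_mul, hν.2.2.2, mul_one] at this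

end ConvexDynamics


section Boundary

variable {E : Type*} [AddCommGroup E] [Module ℝ E] [TopologicalSpace E] [IsTopologicalAddGroup E]
  [ContinuousSMul ℝ E] [LocallyConvexSpace ℝ E] [T2Space E]

theorem exists_minimal_convex (act : G → E →L[ℝ] E)
    (K₀ : Set E) (hc : IsCompact K₀) (hcv : Convex ℝ K₀) (hne : K₀.Nonempty)
    (hinv : ∀ g, ∀ x ∈ K₀, act g x ∈ K₀) :
    ∃ K ⊆ K₀, K.Nonempty ∧ IsCompact K ∧ Convex ℝ K ∧ (∀ g, ∀ x ∈ K, act g x ∈ K) ∧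
      ∀ K' ⊆ K, K'.Nonempty → IsCompact K' → Convex ℝ K' → (∀ g, ∀ x ∈ K', act g x ∈ K') →
        K' = K := by
  let S : Set (Set E) := {K | K.Nonempty ∧ IsCompact K ∧ Convex ℝ K ∧ ∀ g, ∀ x ∈ K, act g x ∈ K}
  obtain ⟨K, hK, hmin⟩ := zorn_superset_nonempty S (by
    intro C hC hchain hCne
    refine ⟨⋂₀ C, ⟨?_, ?_, ?_, ?_⟩, fun s hs => Set.sInter_subset_of_mem hs⟩
    · haveI : Nonempty C := hCne.to_subtype
      refine IsCompact.nonempty_sInter_of_directed_nonempty_isCompact_isClosed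
        (fun a ha b hb => by
          rcases hchain.total ha hb with h | h
          · exact ⟨a, ha, subset_rfl, h⟩
          · exact ⟨b, hb, h, subset_rfl⟩) (fun s hs => (hC hs).1) (fun s hs => (hC hs).2.1)
        (fun s hs => (hC hs).2.1.isClosed)
    · obtain ⟨s, hs⟩ := hCne
      exact (hC hs).2.1.of_isClosed_subset
        (isClosed_sInter fun t ht => (hC ht).2.1.isClosed) (Set.sInter_subset_of_mem hs)
    · exact convex_sInter fun t ht => (hC ht).2.2.1
    · intro g x hx t ht
      exact (hC ht).2.2.2 g x (hx t ht)) K₀ ⟨hne, hc, hcv, hinv⟩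
  have hKS : K ∈ S := hmin.prop
  refine ⟨K, hK, hKS.1, hKS.2.1, hKS.2.2.1, hKS.2.2.2, ?_⟩
  intro K' hK' h1 h2 h3 h4
  exact hK'.antisymm (hmin.2 (⟨h1, h2, h3, h4⟩ : K' ∈ S) hK')

/-- From failure of averaging get a state (Hahn-Banach). -/
theorem exists_state_of_disjoint {X : Type*} [TopologicalSpace X] [CompactSpace X] [Nonempty X]
    (T : Set C(X, ℝ)) (hT : Convex ℝ T) (hTne : T.Nonempty) (c : ℝ)
    (h : ∀ k ∈ T, ¬ ∀ z, c < k z) : ∃ ν : C(X, ℝ) → ℝ, IsSt 1 ν ∧ ∀ k ∈ T, ν k ≤ c := by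
  let O : Set C(X, ℝ) := {k | ∀ z, c < k z}
  have hO : IsOpen O := by
    have := ContinuousMap.isOpen_setOf_mapsTo (X := X) (Y := ℝ) isCompact_univ (isOpen_Ioi (a := c))
    convert this using 1
    ext k
    simp [O, Set.MapsTo]
  have hOc : Convex ℝ O := by
    intro a ha b hb s t hs ht hst z
    have h1 : c < a z := ha z
    have h2 : c < b z := hb z
    simp only [ContinuousMap.coe_add, ContinuousMap.coe_smul, Pi.add_apply, Pi.smul_apply,
      smul_eq_mul]
    rcases hs.eq_or_lt with h0 | h0
    · have : t = 1 := by linarith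
      subst this
      rw [← h0]; linarith
    · have := mul_lt_mul_of_pos_left h1 h0
      have := mul_le_mul_of_nonneg_left h2.le ht
      have : s * c + t * c = c := by rw [← add_mul, hst, one_mul]
      linarith
  obtain ⟨F, u, hF1, hF2⟩ := geometric_hahn_banach_open hOc hO hT
    (Set.disjoint_left.2 fun k hk hkT => h k hkT hk)
  obtain ⟨k₀, hk₀⟩ := hTne
  have hconst : ∀ r : ℝ, c < r → r * F 1 < u := by
    intro r hr
    have := hF1 (r • 1) (fun z => by simpa using hr)
    simpa using this
  have hpos : ∀ k : C(X, ℝ), 0 ≤ k → F k ≤ 0 := by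
    intro k hk
    by_contra hlt
    push Not at hlt
    obtain ⟨n, hn⟩ := exists_nat_gt ((u - (c + 1) * F 1) / F k)
    rw [div_lt_iff₀ hlt] at hn
    have := hF1 ((c + 1) • 1 + (n : ℝ) • k) (fun z => by
      have := hk z
      have h3 : (0 : ℝ) ≤ n * k z := mul_nonneg (Nat.cast_nonneg n) this
      simp; linarith)
    rw [map_add, map_smul, map_smul] at this
    simp only [smul_eq_mul] at this
    linarith
  have hF1ne : F 1 ≠ 0 := by
    intro h0
    have hz : ∀ k, F k = 0 := by
      intro k
      have h1 := hpos (‖k‖ • 1 - k) (sub_nonneg.2 (cont_bdd k).1)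
      have h2 := hpos (‖k‖ • 1 + k) (by
        have := (cont_bdd k).2
        rw [neg_le_iff_add_nonneg] at this
        exact this)
      rw [map_sub, map_smul, h0] at h1
      rw [map_add, map_smul, h0] at h2
      simp at h1 h2
      linarith
    have h1 := hconst (c + 1) (by linarith)
    have h2 := hF2 k₀ hk₀
    rw [hz] at h1 h2
    linarith
  have hF1neg : F 1 < 0 := lt_of_le_of_ne (hpos 1 (fun z => by simp)) hF1ne
  refine ⟨fun k => (F 1)⁻¹ * F k, ⟨fun f g => ?_, fun r f => ?_, fun f hf => ?_, ?_⟩, ?_⟩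
  · simp only [map_add]; ring
  · simp only [map_smul, smul_eq_mul]; ring
  · exact mul_nonneg_of_nonpos_of_nonpos (inv_nonpos.2 hF1neg.le) (hpos f hf)
  · exact inv_mul_cancel₀ hF1ne
  · intro k hk
    have hcu : c * F 1 ≤ u := by
      refine le_of_forall_pos_le_add fun ε hε => ?_
      have := hconst (c + ε / (- F 1)) (by
        have : 0 < ε / (- F 1) := div_pos hε (by linarith)
        linarith)
      have h2 : ε / (- F 1) * F 1 = - ε := by field_simp
      rw [add_mul, h2] at this
      linarith
    have := hF2 k hk
    show (F 1)⁻¹ * F k ≤ c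
    rw [inv_mul_eq_div, div_le_iff_of_neg hF1neg]
    linarith

theorem exists_boundary (act : G → E →L[ℝ] E) (h1 : ∀ x, act 1 x = x)
    (hm : ∀ g h x, act (g * h) x = act g (act h x))
    (K₀ : Set E) (hc : IsCompact K₀) (hcv : Convex ℝ K₀) (hne : K₀.Nonempty)
    (hinv : ∀ g, ∀ x ∈ K₀, act g x ∈ K₀) :
    ∃ X ⊆ K₀, X.Nonempty ∧ IsCompact X ∧ ∃ hX : ∀ g, ∀ x ∈ X, act g x ∈ X,
      ∀ (f : C(X, ℝ)) (x : X) (c : ℝ), c < f x →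
        ∃ (ι : Type) (T : Finset ι) (w : ι → ℝ) (s : ι → G), (∀ i ∈ T, 0 ≤ w i) ∧
          ∑ i ∈ T, w i = 1 ∧ ∀ z : X, c < ∑ i ∈ T, w i * f ⟨act (s i) z, hX (s i) z z.2⟩ := by
  obtain ⟨K, hKK, hKne, hKc, hKcv, hKinv, hKmin⟩ :=
    exists_minimal_convex act K₀ hc hcv hne hinv
  have hXK : closure (K.extremePoints ℝ) ⊆ K := closure_minimal extremePoints_subset hKc.isClosed
  have hinvol : ∀ g x, act g⁻¹ (act g x) = x := fun g x => by rw [← hm, inv_mul_cancel, h1]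
  have hinvol' : ∀ g x, act g (act g⁻¹ x) = x := fun g x => by rw [← hm, mul_inv_cancel, h1]
  have hext : ∀ g, ∀ x ∈ K.extremePoints ℝ, act g x ∈ K.extremePoints ℝ := by
    intro g x hx
    rw [mem_extremePoints] at hx ⊢
    refine ⟨hKinv g x hx.1, fun a ha b hb hab => ?_⟩
    obtain ⟨s, t, hs, ht, hst, he⟩ := hab
    have := hx.2 _ (hKinv g⁻¹ a ha) _ (hKinv g⁻¹ b hb) ⟨s, t, hs, ht, hst, by
      rw [← map_smul, ← map_smul, ← map_add, he, hinvol]⟩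
    constructor
    · rw [← this.1, hinvol']
    · rw [← this.2, hinvol']
  have hX : ∀ g, ∀ x ∈ closure (K.extremePoints ℝ), act g x ∈ closure (K.extremePoints ℝ) := by
    intro g x hx
    exact map_mem_closure (act g).continuous hx (hext g)
  have hXc : IsCompact (closure (K.extremePoints ℝ)) :=
    hKc.of_isClosed_subset isClosed_closure hXK
  have hXne : (closure (K.extremePoints ℝ)).Nonempty := (hKc.extremePoints_nonempty hKne).closure
  refine ⟨closure (K.extremePoints ℝ), hXK.trans hKK, hXne, hXc, hX, ?_⟩
  set X := closure (K.extremePoints ℝ) with hXdef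
  haveI : CompactSpace X := isCompact_iff_compactSpace.1 hXc
  haveI : Nonempty X := hXne.to_subtype
  let aX : G → C(X, X) := fun g => ⟨fun z => ⟨act g z, hX g z z.2⟩, by fun_prop⟩
  intro f x c hcx
  by_contra hcon
  let T : Set C(X, ℝ) := convexHull ℝ (Set.range fun g => f.comp (aX g))
  obtain ⟨ν₀, hν₀, hν₀c⟩ := exists_state_of_disjoint T (convex_convexHull ℝ _)
    ⟨_, subset_convexHull ℝ _ ⟨1, rfl⟩⟩ c (by
      intro k hk hall
      have hk : k ∈ convexHull ℝ (Set.range fun g => f.comp (aX g)) := hk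
      rw [convexHull_eq] at hk
      obtain ⟨ι, t, w, z, hw, hw1, hz, rfl⟩ := hk
      have : ∀ i : ι, ∃ g : G, i ∈ t → f.comp (aX g) = z i := fun i => by
        by_cases hi : i ∈ t
        · obtain ⟨g, hg⟩ := hz i hi
          exact ⟨g, fun _ => hg⟩
        · exact ⟨1, fun h => absurd h hi⟩
      choose s hs using this
      refine hcon ⟨ι, t, w, s, hw, hw1, fun y => ?_⟩
      have := hall y
      rw [Finset.centerMass_eq_of_sum_1 _ _ hw1] at this
      rw [ContinuousMap.coe_sum, Finset.sum_apply] at this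
      refine this.trans_eq (Finset.sum_congr rfl fun i hi => ?_)
      rw [← hs i hi]
      rfl)
  let N : Set (C(X, ℝ) → ℝ) := {ν | IsSt 1 ν ∧ ∀ g, ν (f.comp (aX g)) ≤ c}
  let W : Set ((C(X, ℝ) → ℝ) × E) :=
    (N ×ˢ K) ∩ {p | ∀ l : E →L[ℝ] ℝ, l p.2 = p.1 (resF X l)}
  have hNc : IsCompact N := by
    refine (isCompact_isSt (1 : C(X, ℝ)) fun f => ⟨_, cont_bdd f⟩).of_isClosed_subset ?_
      (fun ν h => h.1)
    refine (isClosed_isSt _).inter (s₂ := {ν | ∀ g, ν (f.comp (aX g)) ≤ c}) ?_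
    rw [Set.ofPred_forall]
    exact isClosed_iInter fun g => isClosed_le (by fun_prop) (by fun_prop)
  have hWc : IsCompact W := by
    refine (hNc.prod hKc).inter_right ?_
    simp only [Set.setOf_forall]
    exact isClosed_iInter fun l => isClosed_eq (by fun_prop) (by fun_prop)
  have hall : Prod.snd '' W = K := by
    apply hKmin
    · rintro _ ⟨p, hp, rfl⟩
      exact hp.1.2
    · obtain ⟨b, hb, hbl⟩ := exists_bary hKc hKcv hKne hXK hν₀
      exact ⟨b, (ν₀, b), ⟨⟨⟨hν₀, fun g => hν₀c _ (subset_convexHull ℝ _ ⟨g, rfl⟩)⟩, hb⟩, hbl⟩, rfl⟩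
    · exact hWc.image continuous_snd
    · rintro _ ⟨⟨ν, x⟩, ⟨⟨⟨hν, hνc⟩, hx⟩, hl⟩, rfl⟩ _ ⟨⟨μ, y⟩, ⟨⟨⟨hμ, hμc⟩, hy⟩, hl'⟩, rfl⟩ a b ha hb hab
      refine ⟨(a • ν + b • μ, a • x + b • y), ⟨⟨⟨convex_isSt _ hν hμ ha hb hab, fun g => ?_⟩,
        hKcv hx hy ha hb hab⟩, fun l => ?_⟩, rfl⟩
      · have h2 := mul_le_mul_of_nonneg_left (hνc g) ha
        have h3 := mul_le_mul_of_nonneg_left (hμc g) hb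
        have : a * c + b * c = c := by rw [← add_mul, hab, one_mul]
        simp only [Pi.add_apply, Pi.smul_apply, smul_eq_mul]
        linarith
      · have h2 := hl l
        have h3 := hl' l
        simp only at h2 h3
        simp only [Pi.add_apply, Pi.smul_apply, smul_eq_mul, map_add, map_smul, h2, h3]
    · rintro g _ ⟨⟨ν, x⟩, ⟨⟨⟨hν, hνc⟩, hx⟩, hl⟩, rfl⟩
      refine ⟨(fun k => ν (k.comp (aX g)), act g x), ⟨⟨⟨⟨fun a b => ?_, fun r a => ?_, fun a ha => ?_,
        ?_⟩, fun s => ?_⟩, hKinv g x hx⟩, fun l => ?_⟩, rfl⟩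
      · exact hν.1 (a.comp (aX g)) (b.comp (aX g))
      · exact hν.2.1 r (a.comp (aX g))
      · exact hν.2.2.1 (a.comp (aX g)) (fun z => ha (aX g z))
      · exact hν.2.2.2
      · have : (f.comp (aX s)).comp (aX g) = f.comp (aX (s * g)) := by
          ext z
          show f _ = f _
          congr 1
          exact Subtype.ext (hm s g z).symm
        show ν ((f.comp (aX s)).comp (aX g)) ≤ c
        rw [this]
        exact hνc _
      · exact hl (l.comp (act g))
  -- find an extreme point where `f > c`
  have hopen : IsOpen {z : X | c < f z} := isOpen_lt continuous_const f.continuous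
  obtain ⟨O, hO, hOe⟩ := isOpen_induced_iff.1 hopen
  have hxO : (x : E) ∈ O := by
    have : x ∈ Subtype.val ⁻¹' O := by rw [hOe]; exact hcx
    exact this
  obtain ⟨y, hyO, hy⟩ := mem_closure_iff.1 x.2 O hO hxO
  have hyX : y ∈ X := subset_closure hy
  have hfy : c < f ⟨y, hyX⟩ := by
    have : (⟨y, hyX⟩ : X) ∈ Subtype.val ⁻¹' O := hyO
    rw [hOe] at this
    exact this
  have hyK : y ∈ Prod.snd '' W := by rw [hall]; exact hXK hyX
  obtain ⟨⟨ν, y'⟩, ⟨⟨⟨hν, hνc⟩, -⟩, hl⟩, rfl⟩ := hyK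
  have hb := bauer hKc hKcv hXK hν ⟨y', hyX⟩ hy hl f
  have : f.comp (aX 1) = f := by
    ext z
    show f _ = f _
    congr 1
    exact Subtype.ext (h1 z)
  have h3 := hνc 1
  rw [this, hb] at h3
  linarith

end Boundary



theorem lreg_apply (g : G) (ξ : ℓ²(G, ℂ)) (k : G) : lreg g ξ k = ξ (g⁻¹ * k) := by
  unfold lreg lregE
  rfl

theorem uu_coe (g : G) : ((uu g : redCstar G) : ℓ²(G, ℂ) →L[ℂ] ℓ²(G, ℂ)) = lreg g := by
  unfold uu
  rfl

theorem coe_mul_apply (a b : redCstar G) (ξ : ℓ²(G, ℂ)) :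
    ((a * b : redCstar G) : ℓ²(G, ℂ) →L[ℂ] ℓ²(G, ℂ)) ξ =
      (a : ℓ²(G, ℂ) →L[ℂ] ℓ²(G, ℂ)) ((b : ℓ²(G, ℂ) →L[ℂ] ℓ²(G, ℂ)) ξ) := rfl

theorem inner_star_apply (a : redCstar G) (ξ η : ℓ²(G, ℂ)) :
    inner ℂ ξ (((star a : redCstar G) : ℓ²(G, ℂ) →L[ℂ] ℓ²(G, ℂ)) η) =
      inner ℂ ((a : ℓ²(G, ℂ) →L[ℂ] ℓ²(G, ℂ)) ξ) η :=
  ContinuousLinearMap.adjoint_inner_right _ _ _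

theorem uu_one : (uu (1 : G)) = 1 := by
  apply Subtype.ext
  rw [uu_coe]
  ext ξ k
  rw [lreg_apply]
  simp

theorem uu_mul (g h : G) : uu (g * h) = uu g * uu h := by
  apply Subtype.ext
  rw [uu_coe]
  push_cast
  rw [uu_coe, uu_coe]
  ext ξ k
  rw [ContinuousLinearMap.mul_apply, lreg_apply, lreg_apply, lreg_apply]
  simp [mul_assoc]

theorem lreg_inner (g : G) (ξ η : ℓ²(G, ℂ)) : inner ℂ (lreg g ξ) (lreg g η) = inner ℂ ξ η := by
  unfold lreg
  exact (lregE g).inner_map_map ξ η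

theorem lreg_norm (g : G) (ξ : ℓ²(G, ℂ)) : ‖lreg g ξ‖ = ‖ξ‖ := by
  unfold lreg
  exact (lregE g).norm_map ξ

theorem uu_inv_mul (g : G) : uu g⁻¹ * uu g = 1 := by rw [← uu_mul, inv_mul_cancel, uu_one]
theorem uu_mul_inv (g : G) : uu g * uu g⁻¹ = 1 := by rw [← uu_mul, mul_inv_cancel, uu_one]

theorem uu_star (g : G) : star (uu g) = uu g⁻¹ := by
  have h : star (uu g) * uu g = 1 := by
    apply Subtype.ext
    refine ContinuousLinearMap.ext fun ξ => ?_
    refine ext_inner_left ℂ fun η => ?_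
    rw [coe_mul_apply, inner_star_apply, uu_coe, lreg_inner]
    rfl
  calc star (uu g) = star (uu g) * (uu g * uu g⁻¹) := by rw [uu_mul_inv, mul_one]
    _ = uu g⁻¹ := by rw [← mul_assoc, h, one_mul]

theorem redCstar_eq : (redCstar G) =
    (StarAlgebra.adjoin ℂ (Set.range (lreg (G := G)))).topologicalClosure := by
  unfold redCstar; rfl

theorem redCstar_closed : IsClosed (redCstar G : Set (ℓ²(G, ℂ) →L[ℂ] ℓ²(G, ℂ))) := by
  rw [redCstar_eq]
  exact StarSubalgebra.isClosed_topologicalClosure _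

attribute [local instance] redCstar_closed

theorem redCstar_complete : CompleteSpace (redCstar G) := redCstar_closed.completeSpace_coe

attribute [local instance] redCstar_complete


theorem span_star (b : redCstar G) (hb : b ∈ Submodule.span ℂ (Set.range (uu (G := G)))) :
    star b ∈ Submodule.span ℂ (Set.range (uu (G := G))) := by
  induction hb using Submodule.span_induction with
  | mem x hx =>
    obtain ⟨g, rfl⟩ := hx
    rw [uu_star]
    exact Submodule.subset_span ⟨_, rfl⟩
  | zero => rw [star_zero]; exact zero_mem _
  | add x y _ _ h1 h2 =>
    rw [star_add]
    exact Submodule.add_mem _ h1 h2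
  | smul c x _ h =>
    rw [star_smul]
    exact Submodule.smul_mem _ _ h

theorem adjoin_span (a : ℓ²(G, ℂ) →L[ℂ] ℓ²(G, ℂ))
    (ha : a ∈ StarAlgebra.adjoin ℂ (Set.range (lreg (G := G)))) :
    ∃ b ∈ Submodule.span ℂ (Set.range (uu (G := G))), (b : ℓ²(G, ℂ) →L[ℂ] ℓ²(G, ℂ)) = a := by
  induction ha using StarAlgebra.adjoin_induction with
  | mem x hx =>
    obtain ⟨g, rfl⟩ := hx
    exact ⟨uu g, Submodule.subset_span ⟨g, rfl⟩, uu_coe g⟩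
  | algebraMap r =>
    refine ⟨r • uu 1, Submodule.smul_mem _ _ (Submodule.subset_span ⟨1, rfl⟩), ?_⟩
    rw [uu_one]
    push_cast
    rw [Algebra.algebraMap_eq_smul_one]
  | add x y hx hy h1 h2 =>
    obtain ⟨b, hb, rfl⟩ := h1
    obtain ⟨c, hc, rfl⟩ := h2
    exact ⟨b + c, Submodule.add_mem _ hb hc, rfl⟩
  | mul x y hx hy h1 h2 =>
    obtain ⟨b, hb, rfl⟩ := h1
    obtain ⟨c, hc, rfl⟩ := h2
    refine ⟨b * c, ?_, rfl⟩
    have := Submodule.mul_mem_mul hb hc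
    rw [Submodule.span_mul_span] at this
    refine Submodule.span_mono ?_ this
    rintro _ ⟨_, ⟨g, rfl⟩, _, ⟨h, rfl⟩, rfl⟩
    exact ⟨g * h, uu_mul g h⟩
  | star x hx h1 =>
    obtain ⟨b, hb, rfl⟩ := h1
    exact ⟨star b, span_star b hb, rfl⟩

theorem span_dense : Dense (Submodule.span ℂ (Set.range (uu (G := G))) : Set (redCstar G)) := by
  intro a
  rw [closure_subtype]
  have ha : ∀ x ∈ redCstar G, x ∈ closure (StarAlgebra.adjoin ℂ (Set.range (lreg (G := G))) :
      Set (ℓ²(G, ℂ) →L[ℂ] ℓ²(G, ℂ))) := by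
    rw [redCstar_eq]
    intro x hx
    exact hx
  replace ha := ha _ a.2
  refine closure_mono ?_ ha
  intro x hx
  obtain ⟨b, hb, rfl⟩ := adjoin_span x hx
  exact ⟨b, hb, rfl⟩

/-- Two continuous functions agreeing on the span are equal. -/
theorem eq_of_uu {φ ψ : redCstar G →L[ℂ] ℂ} (h : ∀ g, φ (uu g) = ψ (uu g)) : φ = ψ := by
  have := ContinuousLinearMap.ext_on (s := Set.range (uu (G := G))) span_dense (f := φ) (g := ψ)
    (by rintro _ ⟨g, rfl⟩; exact h g)
  exact this

open Classical in
def del (g : G) : ℓ²(G, ℂ) := lp.single 2 g 1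

open Classical in
theorem del_apply' (g k : G) : del g k = if k = g then 1 else 0 := by
  unfold del
  rw [lp.coeFn_single, Pi.single_apply]

theorem del_apply [DecidableEq G] (g k : G) : del g k = if k = g then 1 else 0 := by
  rw [del_apply']
  by_cases h : k = g
  · rw [if_pos h, if_pos h]
  · rw [if_neg h, if_neg h]

theorem lreg_del (g k : G) : lreg g (del k) = del (g * k) := by
  classical
  ext j
  rw [lreg_apply, del_apply, del_apply]
  simp [inv_mul_eq_iff_eq_mul]

theorem inner_del (g : G) (ξ : ℓ²(G, ℂ)) : inner ℂ (del g) ξ = ξ g := by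
  classical
  unfold del
  rw [lp.inner_single_left]
  simp

theorem tau_apply (a : redCstar G) :
    tau G a = inner ℂ (del 1) ((a : ℓ²(G, ℂ) →L[ℂ] ℓ²(G, ℂ)) (del 1)) := by
  unfold tau del deltaOne
  rfl

theorem tau_uu [DecidableEq G] (g : G) : tau G (uu g) = if g = 1 then 1 else 0 := by
  rw [tau_apply, uu_coe, lreg_del, inner_del, del_apply]
  simp [eq_comm]

theorem tau_one : tau G 1 = 1 := by
  classical
  rw [← uu_one, tau_uu]; simp

theorem tau_pos (a : redCstar G) : 0 ≤ tau G (star a * a) := by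
  rw [tau_apply]
  rw [coe_mul_apply, inner_star_apply, inner_self_eq_norm_sq_to_K]
  norm_cast
  positivity

theorem lreg_inner_left (g : G) (ξ η : ℓ²(G, ℂ)) :
    inner ℂ ξ (lreg g η) = inner ℂ (lreg g⁻¹ ξ) η := by
  rw [← lreg_inner g⁻¹ ξ]
  congr 1
  ext k
  simp [lreg_apply]

theorem tau_uu_mul (a : redCstar G) (h k : G) : tau G (uu h * a * uu k) =
    ((a : ℓ²(G, ℂ) →L[ℂ] ℓ²(G, ℂ)) (del k)) h⁻¹ := by
  rw [tau_apply]
  rw [coe_mul_apply, coe_mul_apply, uu_coe, uu_coe, lreg_del,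
    mul_one, lreg_inner_left, lreg_del, mul_one, inner_del]

theorem eq_zero_of_tau (a : redCstar G) (h : ∀ h k, tau G (uu h * a * uu k) = 0) : a = 0 := by
  classical
  apply Subtype.ext
  have h1 : ∀ k, (a : ℓ²(G, ℂ) →L[ℂ] ℓ²(G, ℂ)) (del k) = 0 := by
    intro k
    ext j
    have := h j⁻¹ k
    rw [tau_uu_mul, inv_inv] at this
    exact this
  refine ContinuousLinearMap.ext fun ξ => ?_
  have := (lp.hasSum_single (p := 2) (by norm_num) ξ).mapL (a : ℓ²(G, ℂ) →L[ℂ] ℓ²(G, ℂ))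
  have h2 : ∀ k, (a : ℓ²(G, ℂ) →L[ℂ] ℓ²(G, ℂ)) (lp.single 2 k (ξ k)) = 0 := by
    intro k
    have : (lp.single 2 k (ξ k) : ℓ²(G, ℂ)) = ξ k • del k := by
      unfold del
      ext j
      simp [lp.single_apply, Pi.single_apply]
    rw [this, map_smul, h1, smul_zero]
  simp only [h2] at this
  exact this.unique hasSum_zero

theorem dualAct_apply (g : G) (φ : WeakDual ℂ (redCstar G)) (a : redCstar G) :
    dualAct g φ a = φ (uu g⁻¹ * a * uu g) := rfl

theorem dualAct_uu (g k : G) (φ : WeakDual ℂ (redCstar G)) :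
    dualAct g φ (uu k) = φ (uu (g⁻¹ * k * g)) := by
  rw [dualAct_apply, uu_mul, uu_mul]

theorem norm_uu_mul_le (g h : G) (a : redCstar G) : ‖uu g * a * uu h‖ ≤ ‖a‖ := by
  have h1 : ∀ g : G, ‖uu g‖ ≤ 1 := by
    intro g
    have : ‖uu g‖ = ‖lreg g‖ := by rw [← uu_coe]; rfl
    rw [this]
    exact ContinuousLinearMap.opNorm_le_bound _ zero_le_one fun ξ => by rw [lreg_norm, one_mul]
  calc ‖uu g * a * uu h‖ ≤ ‖uu g‖ * ‖a‖ * ‖uu h‖ :=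
        (norm_mul_le _ _).trans (mul_le_mul_of_nonneg_right (norm_mul_le _ _) (norm_nonneg _))
    _ ≤ 1 * ‖a‖ * 1 := by
      gcongr
      · exact h1 g
      · exact h1 h
    _ = ‖a‖ := by ring





theorem redCstar_nontrivial : Nontrivial (redCstar G) :=
  ⟨⟨1, 0, fun h => by
    have h1 := tau_one (G := G)
    rw [h, map_zero] at h1
    exact zero_ne_one h1⟩⟩

attribute [local instance] redCstar_nontrivial

def coeL : WeakDual ℂ (redCstar G) →ₗ[ℝ] (redCstar G → ℂ) where
  toFun φ a := φ a
  map_add' _ _ := rfl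
  map_smul' _ _ := rfl

theorem wd_lc : LocallyConvexSpace ℝ (WeakDual ℂ (redCstar G)) :=
  Topology.IsInducing.locallyConvexSpace (f := coeL) ⟨rfl⟩

attribute [local instance] wd_lc

def dualActL (g : G) : WeakDual ℂ (redCstar G) →L[ℝ] WeakDual ℂ (redCstar G) where
  toFun := dualAct g
  map_add' _ _ := rfl
  map_smul' _ _ := rfl
  cont := dualAct_continuous g

theorem dualActL_apply (g : G) (φ : WeakDual ℂ (redCstar G)) : dualActL g φ = dualAct g φ := rfl

theorem dirac_mem_of_P {X : Type*} [TopologicalSpace X] [CompactSpace X] [T2Space X]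
    [MeasurableSpace X] [BorelSpace X] (aX : G → C(X, X))
    (hP : ∀ (f : C(X, ℝ)) (x : X) (c : ℝ), c < f x →
        ∃ (ι : Type) (T : Finset ι) (w : ι → ℝ) (s : ι → G), (∀ i ∈ T, 0 ≤ w i) ∧
          ∑ i ∈ T, w i = 1 ∧ ∀ z : X, c < ∑ i ∈ T, w i * f (aX (s i) z))
    (μ : ProbabilityMeasure X) (x : X) :
    (⟨Measure.dirac x, Measure.dirac.isProbabilityMeasure⟩ : ProbabilityMeasure X) ∈
      closure {ν : ProbabilityMeasure X | ∃ g : G,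
        ν = μ.map (f := aX g) (aX g).continuous.measurable.aemeasurable} := by
  have hintg : ∀ f : C(X, ℝ), Integrable f (μ : Measure X) := fun f => by
    have := BoundedContinuousFunction.integrable (μ : Measure X)
      (BoundedContinuousFunction.mkOfCompact f)
    exact this
  let S : C(X, ℝ) → Set G := fun f => {g | 0 < ∫ y, f (aX g y) ∂(μ : Measure X)}
  have hSne : ∀ f : C(X, ℝ), 0 < f x → (S f).Nonempty := by
    intro f hf
    obtain ⟨ι, T, w, s, hw, hw1, h⟩ := hP f x (f x / 2) (by linarith)
    have h1 : f x / 2 ≤ ∑ i ∈ T, w i * ∫ y, f (aX (s i) y) ∂(μ : Measure X) := by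
      have h2 : ∫ y, ∑ i ∈ T, w i * f (aX (s i) y) ∂(μ : Measure X) =
          ∑ i ∈ T, w i * ∫ y, f (aX (s i) y) ∂(μ : Measure X) := by
        rw [integral_finsetSum]
        · simp_rw [integral_const_mul]
        · intro i hi
          exact (hintg (f.comp (aX (s i)))).const_mul _
      rw [← h2]
      have h3 : ∫ y : X, f x / 2 ∂(μ : Measure X) = f x / 2 := by simp
      rw [← h3]
      refine integral_mono (integrable_const _) ?_ (fun y => (h y).le)
      exact integrable_finsetSum _ fun i hi => (hintg (f.comp (aX (s i)))).const_mul _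
    by_contra hempty
    have : ∑ i ∈ T, w i * ∫ y, f (aX (s i) y) ∂(μ : Measure X) ≤ 0 := by
      refine Finset.sum_nonpos fun i hi => mul_nonpos_of_nonneg_of_nonpos (hw i hi) ?_
      by_contra hlt
      exact hempty ⟨s i, not_le.1 hlt⟩
    linarith
  let J := {f : C(X, ℝ) // 0 < f x}
  haveI : Nonempty J := ⟨⟨1, by simp⟩⟩
  let F : Filter G := ⨅ f : J, Filter.principal (S f.1)
  have hmono : ∀ f f' : C(X, ℝ), f ≤ f' → S f ⊆ S f' := by
    intro f f' h g hg
    exact lt_of_lt_of_le hg (integral_mono (hintg (f.comp (aX g))) (hintg (f'.comp (aX g)))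
      (fun y => h (aX g y)))
  haveI : F.NeBot := by
    refine Filter.iInf_neBot_of_directed' ?_ (fun f => Filter.principal_neBot_iff.2 (hSne f.1 f.2))
    intro f f'
    refine ⟨⟨f.1 ⊓ f'.1, lt_min f.2 f'.2⟩, ?_, ?_⟩
    · exact Filter.principal_mono.2 (hmono _ _ inf_le_left)
    · exact Filter.principal_mono.2 (hmono _ _ inf_le_right)
  have hmem : ∀ f : C(X, ℝ), 0 < f x → S f ∈ F := fun f hf =>
    Filter.mem_iInf_of_mem (⟨f, hf⟩ : J) (Filter.mem_principal_self _)
  refine mem_closure_of_tendsto (X := ProbabilityMeasure X) (b := F) (f := fun g : G => μ.map (f := aX g)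
    (aX g).continuous.measurable.aemeasurable) ?_ (Filter.Eventually.of_forall fun g => ⟨g, rfl⟩)
  refine ProbabilityMeasure.tendsto_iff_forall_integral_tendsto.2 fun f => ?_
  have e1 : ∀ g : G, ∫ y, f y ∂((μ.map (f := aX g)
      (aX g).continuous.measurable.aemeasurable : ProbabilityMeasure X) : Measure X) =
      ∫ y, f (aX g y) ∂(μ : Measure X) := by
    intro g
    rw [ProbabilityMeasure.toMeasure_map]
    rw [integral_map (aX g).continuous.measurable.aemeasurable]
    exact f.continuous.aestronglyMeasurable
  simp_rw [e1]
  have e2 : ∫ y, f y ∂(Measure.dirac x) = f x := integral_dirac _ _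
  change Filter.Tendsto _ F (nhds (∫ y, f y ∂(Measure.dirac x)))
  rw [e2]
  refine tendsto_order.2 ⟨fun c hc => ?_, fun c hc => ?_⟩
  · filter_upwards [hmem (f.toContinuousMap - ContinuousMap.const X c) (sub_pos.2 hc)] with g hg
    have hfi : Integrable (fun y => f (aX g y)) (μ : Measure X) :=
      hintg (f.toContinuousMap.comp (aX g))
    have hg : 0 < ∫ y, (f (aX g y) - c) ∂(μ : Measure X) := hg
    rw [integral_sub hfi (integrable_const _)] at hg
    simpa using hg
  · filter_upwards [hmem (ContinuousMap.const X c - f.toContinuousMap) (sub_pos.2 hc)] with g hg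
    have hfi : Integrable (fun y => f (aX g y)) (μ : Measure X) :=
      hintg (f.toContinuousMap.comp (aX g))
    have hg : 0 < ∫ y, (c - f (aX g y)) ∂(μ : Measure X) := hg
    rw [integral_sub (integrable_const _) hfi] at hg
    simpa using hg

theorem boundary_of_P (X : Set (WeakDual ℂ (redCstar G))) (hne : X.Nonempty) (hc : IsCompact X)
    (hX : ∀ g : G, ∀ x ∈ X, dualActL g x ∈ X)
    (hP : ∀ (f : C(X, ℝ)) (x : X) (c : ℝ), c < f x →
        ∃ (ι : Type) (T : Finset ι) (w : ι → ℝ) (s : ι → G), (∀ i ∈ T, 0 ≤ w i) ∧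
          ∑ i ∈ T, w i = 1 ∧ ∀ z : X, c < ∑ i ∈ T, w i * f ⟨dualActL (s i) z, hX (s i) z z.2⟩) :
    IsDualBoundary G X := by
  refine ⟨hne, hc, fun g φ h => hX g φ h, ?_⟩
  letI : MeasurableSpace X := borel X
  haveI : BorelSpace X := ⟨rfl⟩
  haveI : CompactSpace X := isCompact_iff_compactSpace.1 hc
  intro μ x
  exact dirac_mem_of_P (X := X) (fun g => ⟨fun y => ⟨dualAct g y.1, hX g y.1 y.2⟩,
    ((dualAct_continuous g).comp continuous_subtype_val).subtype_mk _⟩) hP μ x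

theorem backward (H : ∀ B : Set (WeakDual ℂ (redCstar G)), IsDualBoundary G B →
        ∃ c : ℂ, B = {c • tau G}) : IsCstarSimple G := by
  intro I hI
  rw [or_iff_not_imp_right]
  intro hItop
  have h1I : (1 : redCstar G) ∉ I := by
    intro h
    apply hItop
    rw [eq_top_iff]
    intro a _
    have := I.mul_mem_left a 1 h
    rwa [mul_one] at this
  -- the ideal as a submodule
  let M : Submodule ℂ (redCstar G) :=
    { carrier := I
      add_mem' := fun ha hb => I.add_mem ha hb
      zero_mem' := I.zero_mem
      smul_mem' := fun c a ha => by
        have := I.mul_mem_left (c • 1) a ha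
        rwa [smul_mul_assoc, one_mul] at this }
  have hMclosed : IsClosed (M : Set (redCstar G)) := hI
  have hdist : ∀ a ∈ I, 1 ≤ ‖(1 : redCstar G) + a‖ := by
    intro a ha
    by_contra hlt
    push Not at hlt
    obtain ⟨u, hu⟩ := isUnit_one_sub_of_norm_lt_one hlt
    have hu' : (u : redCstar G) = -a := by rw [hu]; abel
    apply h1I
    have h2 : (u : redCstar G) ∈ I := by rw [hu']; exact I.neg_mem ha
    have := I.mul_mem_left (↑u⁻¹) _ h2
    rwa [Units.inv_mul] at this
  let K₀ : Set (WeakDual ℂ (redCstar G)) :=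
    {φ | φ 1 = 1 ∧ (∀ a, ‖φ a‖ ≤ ‖a‖) ∧ ∀ a ∈ I, φ a = 0}
  have hK₀c : IsCompact K₀ := by
    refine (WeakDual.isCompact_closedBall (0 : StrongDual ℂ (redCstar G)) 1).of_isClosed_subset
      ?_ ?_
    · have e : K₀ = {φ | φ 1 = 1} ∩ ((⋂ a : redCstar G, {φ | ‖φ a‖ ≤ ‖a‖}) ∩
          ⋂ a ∈ I, {φ | φ a = 0}) := by
        ext φ
        simp [K₀]
      rw [e]
      refine (isClosed_eq (WeakDual.eval_continuous _) continuous_const).inter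
        ((isClosed_iInter fun a => isClosed_le (WeakDual.eval_continuous a).norm continuous_const).inter
          (isClosed_biInter fun a _ => isClosed_eq (WeakDual.eval_continuous _) continuous_const))
    · intro φ hφ
      rw [Set.mem_preimage, mem_closedBall_zero_iff]
      refine ContinuousLinearMap.opNorm_le_bound _ zero_le_one fun a => ?_
      rw [one_mul]
      exact hφ.2.1 a
  have hK₀cv : Convex ℝ K₀ := by
    intro φ hφ ψ hψ s t hs ht hst
    refine ⟨?_, fun a => ?_, fun a ha => ?_⟩
    · show (s : ℝ) • φ 1 + t • ψ 1 = 1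
      rw [hφ.1, hψ.1, ← add_smul, hst, one_smul]
    · show ‖s • φ a + t • ψ a‖ ≤ ‖a‖
      refine (norm_add_le _ _).trans ?_
      rw [norm_smul, norm_smul, Real.norm_of_nonneg hs, Real.norm_of_nonneg ht]
      have h3 := mul_le_mul_of_nonneg_left (hφ.2.1 a) hs
      have h4 := mul_le_mul_of_nonneg_left (hψ.2.1 a) ht
      have : s * ‖a‖ + t * ‖a‖ = ‖a‖ := by rw [← add_mul, hst, one_mul]
      linarith
    · show s • φ a + t • ψ a = 0
      rw [hφ.2.2 a ha, hψ.2.2 a ha, smul_zero, smul_zero, add_zero]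
  have hK₀ne : K₀.Nonempty := by
    have hq : ‖(M.mkQ 1 : redCstar G ⧸ M)‖ = 1 := by
      apply le_antisymm
      · refine (Submodule.Quotient.norm_mk_le M 1).trans ?_
        exact CStarRing.norm_one.le
      · refine le_of_forall_pos_le_add fun ε hε => ?_
        obtain ⟨m, hm, hlt⟩ := Submodule.Quotient.norm_mk_lt (M.mkQ 1 : redCstar G ⧸ M) hε
        have hm' : m - 1 ∈ I := (Submodule.Quotient.eq M).1 hm
        have := hdist _ hm'
        rw [add_sub_cancel] at this
        exact this.trans hlt.le
    obtain ⟨φ, hφ, hφ1⟩ := exists_dual_vector'' ℂ (M.mkQ 1 : redCstar G ⧸ M)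
    let ψ : redCstar G →L[ℂ] ℂ := φ.comp ⟨M.mkQ, by exact continuous_quot_mk⟩
    refine ⟨StrongDual.toWeakDual ψ, ?_, fun a => ?_, fun a ha => ?_⟩
    · show φ (M.mkQ 1) = 1
      rw [hφ1, hq]; simp
    · show ‖φ (M.mkQ a)‖ ≤ ‖a‖
      refine (φ.le_of_opNorm_le hφ _).trans ?_
      rw [one_mul]
      exact Submodule.Quotient.norm_mk_le M a
    · show φ (M.mkQ a) = 0
      have : M.mkQ a = 0 := (Submodule.Quotient.mk_eq_zero M).2 ha
      rw [this, map_zero]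
  have hK₀inv : ∀ g : G, ∀ φ ∈ K₀, dualActL g φ ∈ K₀ := by
    intro g φ hφ
    refine ⟨?_, fun a => ?_, fun a ha => ?_⟩
    · rw [dualActL_apply, dualAct_apply, mul_one, uu_inv_mul, hφ.1]
    · rw [dualActL_apply, dualAct_apply]
      exact (hφ.2.1 _).trans (norm_uu_mul_le _ _ _)
    · rw [dualActL_apply, dualAct_apply]
      exact hφ.2.2 _ (I.mul_mem_right _ _ (I.mul_mem_left _ _ ha))
  obtain ⟨X, hXK, hXne, hXc, hX, hP⟩ := exists_boundary (G := G) dualActL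
    (fun φ => by
      refine DFunLike.ext _ _ fun a => ?_
      rw [dualActL_apply, dualAct_apply, inv_one, uu_one, one_mul, mul_one])
    (fun g h φ => by
      refine DFunLike.ext _ _ fun a => ?_
      simp only [dualActL_apply, dualAct_apply]
      rw [mul_inv_rev, uu_mul, uu_mul]
      simp only [mul_assoc])
    K₀ hK₀c hK₀cv hK₀ne hK₀inv
  obtain ⟨c, hc⟩ := H X (boundary_of_P X hXne hXc hX hP)
  have hcK : c • tau G ∈ K₀ := hXK (by rw [hc]; rfl)
  have hc1 : c = 1 := by
    have : c * tau G 1 = 1 := hcK.1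
    rwa [tau_one, mul_one] at this
  rw [hc1, one_smul] at hcK
  rw [eq_bot_iff]
  intro a ha
  rw [TwoSidedIdeal.mem_bot]
  exact eq_zero_of_tau a fun h k => hcK.2.2 _ (I.mul_mem_right _ _ (I.mul_mem_left _ _ ha))




section Means

variable (G) in
/-- Bounded real functions on `G`. -/
def BF : Submodule ℝ (G → ℝ) where
  carrier := {f | ∃ C : ℝ, ∀ k, |f k| ≤ C}
  add_mem' := by
    rintro f g ⟨C, hC⟩ ⟨D, hD⟩
    exact ⟨C + D, fun k => (abs_add_le _ _).trans (add_le_add (hC k) (hD k))⟩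
  zero_mem' := ⟨0, fun k => by simp⟩
  smul_mem' := by
    rintro c f ⟨C, hC⟩
    exact ⟨|c| * C, fun k => by
      rw [Pi.smul_apply, smul_eq_mul, abs_mul]
      exact mul_le_mul_of_nonneg_left (hC k) (abs_nonneg c)⟩

instance BF_ord : IsOrderedAddMonoid (BF G) where
  add_le_add_left a b hab c := fun k => by
    have : (a : G → ℝ) k ≤ (b : G → ℝ) k := hab k
    show (a : G → ℝ) k + (c : G → ℝ) k ≤ (b : G → ℝ) k + (c : G → ℝ) k
    linarith

def BFone : BF G := ⟨fun _ => 1, 1, fun k => by simp⟩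

def BFtr (g : G) (f : BF G) : BF G := ⟨fun k => f.1 (g * k), by
  obtain ⟨C, hC⟩ := f.2
  exact ⟨C, fun k => hC _⟩⟩

theorem BFtr_apply (g : G) (f : BF G) (k : G) : (BFtr g f : G → ℝ) k = (f : G → ℝ) (g * k) := rfl

def meanAct (g : G) : (BF G → ℝ) →L[ℝ] (BF G → ℝ) where
  toFun m f := m (BFtr g f)
  map_add' _ _ := rfl
  map_smul' _ _ := rfl
  cont := by fun_prop

theorem meanAct_apply (g : G) (m : BF G → ℝ) (f : BF G) : meanAct g m f = m (BFtr g f) := rfl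

theorem meanAct_one (m : BF G → ℝ) : meanAct 1 m = m := by
  ext f
  have : BFtr 1 f = f := Subtype.ext (funext fun k => by rw [BFtr_apply, one_mul])
  rw [meanAct_apply, this]

theorem meanAct_mul (g h : G) (m : BF G → ℝ) : meanAct (g * h) m = meanAct g (meanAct h m) := by
  ext f
  have : BFtr (g * h) f = BFtr h (BFtr g f) :=
    Subtype.ext (funext fun k => by rw [BFtr_apply, BFtr_apply, BFtr_apply, mul_assoc])
  rw [meanAct_apply, meanAct_apply, meanAct_apply, this]

/-- Property P (an averaging form of strong proximality plus minimality). -/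
def PropP (G : Type*) [Group G] (X : Type*) [TopologicalSpace X] [MulAction G X] : Prop :=
  ∀ (f : C(X, ℝ)) (x : X) (c : ℝ), c < f x →
    ∃ (ι : Type) (T : Finset ι) (w : ι → ℝ) (s : ι → G), (∀ i ∈ T, 0 ≤ w i) ∧
      ∑ i ∈ T, w i = 1 ∧ ∀ z : X, c < ∑ i ∈ T, w i * f (s i • z)

variable (G) in
theorem exists_bd : ∃ (X : Type u) (_ : TopologicalSpace X) (_ : CompactSpace X) (_ : T2Space X)
    (_ : Nonempty X) (_ : MulAction G X) (_ : ContinuousConstSMul G X), PropP G X ∧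
    ∀ y : X, ∃ m : BF G → ℝ, IsSt BFone m ∧ ∀ h : G, h • y = y → ∀ f, m (BFtr h f) = m f := by
  obtain ⟨X, hXK, hXne, hXc, hX, hP⟩ := exists_boundary (G := G) (E := BF G → ℝ) meanAct
    meanAct_one meanAct_mul
    {m | IsSt BFone m}
    (isCompact_isSt BFone (fun f => by
      obtain ⟨C, hC⟩ := f.2
      refine ⟨C, fun k => ?_, fun k => ?_⟩
      · show f.1 k ≤ C * 1
        rw [mul_one]
        exact (abs_le.1 (hC k)).2
      · show - f.1 k ≤ C * 1
        have := (abs_le.1 (hC k)).1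
        linarith))
    (convex_isSt BFone)
    ⟨fun f => f.1 1, fun f g => rfl, fun c f => rfl, fun f hf => hf 1, rfl⟩
    (fun g m hm => ⟨fun f f' => hm.1 (BFtr g f) (BFtr g f'), fun c f => hm.2.1 c (BFtr g f),
      fun f hf => hm.2.2.1 (BFtr g f) (fun k => hf (g * k)), hm.2.2.2⟩)
  letI : MulAction G X :=
    { smul := fun g x => ⟨meanAct g x, hX g x x.2⟩
      one_smul := fun x => Subtype.ext (meanAct_one x.1)
      mul_smul := fun g h x => Subtype.ext (meanAct_mul g h x.1) }
  refine ⟨X, inferInstance, isCompact_iff_compactSpace.1 hXc, inferInstance, hXne.to_subtype,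
    inferInstance, ⟨fun g => ((meanAct g).continuous.comp continuous_subtype_val).subtype_mk _⟩,
    hP, ?_⟩
  intro y
  refine ⟨y.1, hXK y.2, fun h hy f => ?_⟩
  have : meanAct h y.1 = y.1 := congrArg Subtype.val hy
  exact congrFun this f

open Classical in
/-- Reiter's condition for a subgroup admitting an invariant mean on `G`. -/
theorem reiter (H : Subgroup G) (m : BF G → ℝ) (hm : IsSt BFone m)
    (hmi : ∀ h ∈ H, ∀ f, m (BFtr h f) = m f) (S : Finset G) (hS : ∀ h ∈ S, h ∈ H) (ε : ℝ)
    (hε : 0 < ε) :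
    ∃ (ι : Type) (T : Finset ι) (w : ι → ℝ) (k : ι → G), (∀ i ∈ T, 0 ≤ w i) ∧ ∑ i ∈ T, w i = 1 ∧
      (∀ i, k i ∈ H) ∧
      ∀ h ∈ S, ‖∑ i ∈ T, w i • ((lp.single 1 (h * k i) 1 : lp (fun _ : G => ℝ) 1) -
        lp.single 1 (k i) 1)‖ < ε := by
  let dl : G → lp (fun _ : G => ℝ) 1 := fun k => lp.single 1 k 1
  have hdl : ∀ k, ‖dl k‖ ≤ 1 := fun k => by
    rw [lp.norm_single (by norm_num)]; simp
  let v : H → (S → lp (fun _ : G => ℝ) 1) := fun k h => dl (h * k) - dl k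
  by_cases h0 : (0 : S → lp (fun _ : G => ℝ) 1) ∈ closure (convexHull ℝ (Set.range v))
  · obtain ⟨b, hb, hbε⟩ := Metric.mem_closure_iff.1 h0 ε hε
    rw [dist_zero_left] at hbε
    rw [convexHull_eq] at hb
    obtain ⟨ι, t, w, z, hw, hw1, hz, rfl⟩ := hb
    have : ∀ i : ι, ∃ k : H, i ∈ t → v k = z i := fun i => by
      by_cases hi : i ∈ t
      · obtain ⟨g, hg⟩ := hz i hi
        exact ⟨g, fun _ => hg⟩
      · exact ⟨1, fun h => absurd h hi⟩
    choose k hk using this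
    refine ⟨ι, t, w, fun i => k i, hw, hw1, fun i => (k i).2, fun h hh => ?_⟩
    refine lt_of_le_of_lt ?_ hbε
    have h2 := norm_le_pi_norm (t.centerMass w z) ⟨h, hh⟩
    refine le_trans (le_of_eq ?_) h2
    rw [Finset.centerMass_eq_of_sum_1 _ _ hw1, Finset.sum_apply]
    congr 1
    refine Finset.sum_congr rfl fun i hi => ?_
    rw [← hk i hi]
    rfl
  · exfalso
    obtain ⟨F, u, hF0, hF⟩ := geometric_hahn_banach_point_closed
      ((convex_convexHull ℝ (Set.range v)).closure) isClosed_closure h0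
    rw [map_zero] at hF0
    have hFv : ∀ k, u < F (v k) := fun k => hF _ (subset_closure (subset_convexHull ℝ _ ⟨k, rfl⟩))
    let f : S → G → ℝ := fun h j => F (Pi.single h (dl j))
    have hfb : ∀ h j, |f h j| ≤ ‖F‖ := by
      intro h j
      have := F.le_opNorm (Pi.single h (dl j))
      refine this.trans ?_
      have h2 : ‖(Pi.single h (dl j) : S → lp (fun _ : G => ℝ) 1)‖ ≤ 1 := by
        rw [pi_norm_le_iff_of_nonneg zero_le_one]
        intro i
        by_cases hi : i = h
        · subst hi; rw [Pi.single_eq_same]; exact hdl j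
        · rw [Pi.single_eq_of_ne hi]; simp
      exact mul_le_of_le_one_right (norm_nonneg _) h2
    have hFf : ∀ k : H, F (v k) = ∑ h : S, (f h (h * k) - f h k) := by
      intro k
      have : v k = ∑ h : S, Pi.single h (v k h) := (Finset.univ_sum_single (v k)).symm
      rw [this, map_sum]
      refine Finset.sum_congr rfl fun h _ => ?_
      have : (Pi.single h (v k h) : S → lp (fun _ : G => ℝ) 1) =
          Pi.single h (dl (h * k)) - Pi.single h (dl k) := by
        rw [← Pi.single_sub]
      rw [this, map_sub]
    -- equivariant map
    let r : G → G := fun j => Quotient.out (Quotient.mk (QuotientGroup.rightRel H) j)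
    have hr1 : ∀ j, j * (r j)⁻¹ ∈ H := fun j => by
      have := Quotient.mk_out (s := QuotientGroup.rightRel H) j
      exact QuotientGroup.rightRel_apply.1 this
    have hr2 : ∀ h ∈ H, ∀ j, r (h * j) = r j := fun h hh j => by
      have : Quotient.mk (QuotientGroup.rightRel H) (h * j) =
          Quotient.mk (QuotientGroup.rightRel H) j := by
        apply Quotient.sound
        refine QuotientGroup.rightRel_apply.2 ?_
        have : j * (h * j)⁻¹ = h⁻¹ := by group
        rw [this]
        exact H.inv_mem hh
      show Quotient.out _ = Quotient.out _
      rw [this]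
    let w : S → BF G := fun h => ⟨fun j => f h (j * (r j)⁻¹), ‖F‖, fun j => hfb _ _⟩
    have hz : m (∑ h : S, (BFtr (h : G) (w h) - w h)) = 0 := by
      rw [hm.sum]
      refine Finset.sum_eq_zero fun h _ => ?_
      rw [hm.sub, hmi h (hS h h.2), sub_self]
    have hge : u • BFone ≤ ∑ h : S, (BFtr (h : G) (w h) - w h) := by
      intro j
      have e1 : ((∑ h : S, (BFtr (h : G) (w h) - w h) : BF G) : G → ℝ) j = F (v ⟨_, hr1 j⟩) := by
        rw [hFf, AddSubmonoidClass.coe_finset_sum, Finset.sum_apply]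
        refine Finset.sum_congr rfl fun h _ => ?_
        show f h (h * j * (r (h * j))⁻¹) - f h (j * (r j)⁻¹) = _
        rw [hr2 h (hS h h.2), mul_assoc]
      refine le_trans ?_ e1.ge
      refine le_trans (le_of_eq ?_) (hFv _).le
      show u * 1 = u
      rw [mul_one]
    have := hm.mono hge
    rw [hz, hm.2.1, hm.2.2.2] at this
    linarith

end Means


section Phi

theorem hasSum_sq (ξ : ℓ²(G, ℂ)) : HasSum (fun k => ‖ξ k‖ ^ 2) (‖ξ‖ ^ 2) := by
  have := lp.hasSum_norm (p := 2) (by norm_num) ξ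
  simpa using this

theorem sqrt_sub_sq (a b : ℝ) (ha : 0 ≤ a) (hb : 0 ≤ b) : (√a - √b) ^ 2 ≤ |a - b| := by
  have h1 : a - b = (√a - √b) * (√a + √b) := by
    have := Real.mul_self_sqrt ha
    have := Real.mul_self_sqrt hb
    nlinarith
  rw [h1, abs_mul, ← sq_abs, sq]
  refine mul_le_mul_of_nonneg_left ?_ (abs_nonneg _)
  rw [abs_of_nonneg (add_nonneg (Real.sqrt_nonneg a) (Real.sqrt_nonneg b)), abs_le]
  constructor <;> linarith [Real.sqrt_nonneg a, Real.sqrt_nonneg b]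

theorem reiter2 (H : Subgroup G) (m : BF G → ℝ) (hm : IsSt BFone m)
    (hmi : ∀ h ∈ H, ∀ f, m (BFtr h f) = m f) (S : Finset G) (hS : ∀ h ∈ S, h ∈ H) (ε : ℝ)
    (hε : 0 < ε) :
    ∃ ξ : ℓ²(G, ℂ), ‖ξ‖ = 1 ∧ (∀ k, k ∉ H → ξ k = 0) ∧ ∀ h ∈ S, ‖lreg h ξ - ξ‖ ^ 2 ≤ ε := by
  classical
  obtain ⟨ι, T, w, k, hw, hw1, hk, hlt⟩ := reiter H m hm hmi S hS ε hε
  let η : G → ℝ := fun j => ∑ i ∈ T, w i * (if j = k i then 1 else 0)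
  have hη0 : ∀ j, 0 ≤ η j := fun j => Finset.sum_nonneg fun i hi => mul_nonneg (hw i hi) (by
    split_ifs <;> norm_num)
  have hηs : HasSum η 1 := by
    rw [← hw1]
    refine hasSum_sum fun i hi => ?_
    have := (hasSum_ite_eq (k i) (1 : ℝ)).mul_left (w i)
    simpa using this
  have hsq : ∀ j, ‖((√(η j) : ℝ) : ℂ)‖ ^ 2 = η j := fun j => by
    rw [Complex.norm_real, Real.norm_of_nonneg (Real.sqrt_nonneg _), Real.sq_sqrt (hη0 j)]
  let ξ : ℓ²(G, ℂ) := ⟨fun j => ((√(η j) : ℝ) : ℂ), memℓp_gen (by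
    have h0 := hηs.summable
    have e : (fun j => ‖((√(η j) : ℝ) : ℂ)‖ ^ 2) = η := funext fun j => hsq j
    rw [← e] at h0
    simpa using h0)⟩
  have hξ : ∀ j, ξ j = ((√(η j) : ℝ) : ℂ) := fun j => rfl
  refine ⟨ξ, ?_, fun j hj => ?_, fun h hh => ?_⟩
  · have h1 : HasSum η (‖ξ‖ ^ 2) := by
      have h0 := hasSum_sq ξ
      have e : (fun k => ‖ξ k‖ ^ 2) = η := funext fun j => hsq j
      rwa [e] at h0
    have := h1.unique hηs
    nlinarith [norm_nonneg ξ]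
  · have : η j = 0 := Finset.sum_eq_zero fun i hi => by
      have hne : j ≠ k i := fun e => hj (by rw [e]; exact hk i)
      rw [if_neg hne, mul_zero]
    rw [hξ, this]; simp
  · set c : lp (fun _ : G => ℝ) 1 := ∑ i ∈ T, w i • ((lp.single 1 (h * k i) 1 :
      lp (fun _ : G => ℝ) 1) - lp.single 1 (k i) 1) with hcdef
    have hcε : ‖c‖ < ε := by
      have := hlt h hh
      convert this
    have hcj : ∀ j, c j = η (h⁻¹ * j) - η j := by
      intro j
      rw [hcdef, lp.coeFn_sum, Finset.sum_apply, ← Finset.sum_sub_distrib]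
      refine Finset.sum_congr rfl fun i hi => ?_
      rw [lp.coeFn_smul, Pi.smul_apply, lp.coeFn_sub, Pi.sub_apply, lp.coeFn_single,
        lp.coeFn_single, Pi.single_apply, Pi.single_apply, smul_eq_mul, mul_sub]
      simp only [inv_mul_eq_iff_eq_mul]
    have h1 : HasSum (fun j => |c j|) ‖c‖ := by
      have := lp.hasSum_norm (p := 1) (by norm_num) c
      simpa using this
    have h2 := hasSum_sq (lreg h ξ - ξ)
    refine (hasSum_le (fun j => ?_) h2 h1).trans hcε.le
    rw [hcj, lp.coeFn_sub, Pi.sub_apply, lreg_apply, hξ, hξ, ← Complex.ofReal_sub,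
      Complex.norm_real, Real.norm_eq_abs, sq_abs]
    exact sqrt_sub_sq _ _ (hη0 _) (hη0 _)

/-- vector states -/
def vst (ξ : ℓ²(G, ℂ)) : WeakDual ℂ (redCstar G) :=
  (innerSL ℂ ξ).comp
    ((ContinuousLinearMap.apply ℂ ℓ²(G, ℂ) ξ).comp
      { toLinearMap := (redCstar G).subtype.toLinearMap, cont := continuous_subtype_val })

theorem vst_apply (ξ : ℓ²(G, ℂ)) (a : redCstar G) :
    vst ξ a = inner ℂ ξ ((a : ℓ²(G, ℂ) →L[ℂ] ℓ²(G, ℂ)) ξ) := rfl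

theorem coe_norm_eq (a : redCstar G) : ‖(a : ℓ²(G, ℂ) →L[ℂ] ℓ²(G, ℂ))‖ = ‖a‖ := rfl

theorem vst_norm (ξ : ℓ²(G, ℂ)) (hξ : ‖ξ‖ = 1) (a : redCstar G) : ‖vst ξ a‖ ≤ ‖a‖ := by
  rw [vst_apply]
  refine (norm_inner_le_norm _ _).trans ?_
  rw [hξ, one_mul]
  refine ((a : ℓ²(G, ℂ) →L[ℂ] ℓ²(G, ℂ)).le_opNorm ξ).trans ?_
  rw [hξ, mul_one, coe_norm_eq]

theorem vst_pos (ξ : ℓ²(G, ℂ)) (a : redCstar G) : 0 ≤ vst ξ (star a * a) := by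
  rw [vst_apply, coe_mul_apply, inner_star_apply, inner_self_eq_norm_sq_to_K]
  norm_cast
  positivity

theorem exists_phi (H : Subgroup G) (m : BF G → ℝ) (hm : IsSt BFone m)
    (hmi : ∀ h ∈ H, ∀ f, m (BFtr h f) = m f) :
    ∃ φ : WeakDual ℂ (redCstar G), (∀ g ∈ H, φ (uu g) = 1) ∧ (∀ g, g ∉ H → φ (uu g) = 0) ∧
      ∀ a, 0 ≤ φ (star a * a) := by
  classical
  have hex : ∀ p : Finset G × ℕ, ∃ ξ : ℓ²(G, ℂ), ‖ξ‖ = 1 ∧ (∀ k, k ∉ H → ξ k = 0) ∧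
      ∀ h ∈ p.1, h ∈ H → ‖lreg h ξ - ξ‖ ^ 2 ≤ 1 / ((p.2 : ℝ) + 1) := by
    intro p
    obtain ⟨ξ, h1, h2, h3⟩ := reiter2 H m hm hmi (p.1.filter (· ∈ H))
      (fun h hh => (Finset.mem_filter.1 hh).2) (1 / ((p.2 : ℝ) + 1)) (by positivity)
    exact ⟨ξ, h1, h2, fun h hh hH => h3 h (Finset.mem_filter.2 ⟨hh, hH⟩)⟩
  choose ξ hξ1 hξ2 hξ3 using hex
  let U : Ultrafilter (Finset G × ℕ) := Ultrafilter.of Filter.atTop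
  have hU : (U : Filter (Finset G × ℕ)) ≤ Filter.atTop := Ultrafilter.of_le _
  have hball : ∀ p, vst (ξ p) ∈
      WeakDual.toStrongDual ⁻¹' Metric.closedBall (0 : StrongDual ℂ (redCstar G)) 1 := by
    intro p
    rw [Set.mem_preimage]
    refine (mem_closedBall_zero_iff (E := StrongDual ℂ (redCstar G))).2 ?_
    refine ContinuousLinearMap.opNorm_le_bound _ zero_le_one fun a => ?_
    rw [one_mul]
    exact vst_norm _ (hξ1 p) a
  obtain ⟨φ, -, hφ⟩ := (WeakDual.isCompact_closedBall (0 : StrongDual ℂ (redCstar G))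
    1).ultrafilter_le_nhds' (U.map fun p => vst (ξ p)) (by
      rw [Ultrafilter.mem_map]
      exact Filter.mem_of_superset Filter.univ_mem fun p _ => hball p)
  have hlim : ∀ a, Filter.Tendsto (fun p => vst (ξ p) a) U (nhds (φ a)) := fun a =>
    ((WeakDual.eval_continuous a).tendsto φ).comp hφ
  refine ⟨φ, fun g hg => ?_, fun g hg => ?_, fun a => ?_⟩
  · refine tendsto_nhds_unique (hlim (uu g)) (Filter.Tendsto.mono_left ?_ hU)
    rw [tendsto_iff_norm_sub_tendsto_zero]
    have hb : Filter.Tendsto (fun p : Finset G × ℕ => √(1 / ((p.2 : ℝ) + 1))) Filter.atTop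
        (nhds 0) := by
      have h1 := (tendsto_one_div_add_atTop_nhds_zero_nat (𝕜 := ℝ)).sqrt
      rw [Real.sqrt_zero] at h1
      rw [← Filter.prod_atTop_atTop_eq]
      exact h1.comp Filter.tendsto_snd
    refine squeeze_zero' (Filter.Eventually.of_forall fun p => norm_nonneg _) ?_ hb
    filter_upwards [Filter.eventually_ge_atTop (({g} : Finset G), 0)] with p hp
    have hgp : g ∈ p.1 := hp.1 (Finset.mem_singleton_self g)
    have h1 : vst (ξ p) (uu g) - 1 = inner ℂ (ξ p) (lreg g (ξ p) - ξ p) := by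
      rw [vst_apply, uu_coe, inner_sub_right, inner_self_eq_norm_sq_to_K, hξ1]
      norm_num
    rw [h1]
    refine (norm_inner_le_norm _ _).trans ?_
    rw [hξ1, one_mul]
    exact Real.le_sqrt_of_sq_le (hξ3 p g hgp hg)
  · refine tendsto_nhds_unique (hlim (uu g)) ?_
    have : ∀ p, vst (ξ p) (uu g) = 0 := by
      intro p
      rw [vst_apply, uu_coe, lp.inner_eq_tsum]
      have : ∀ k, inner ℂ (ξ p k) (lreg g (ξ p) k) = 0 := by
        intro k
        rw [lreg_apply]
        by_cases hk : k ∈ H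
        · rw [hξ2 p (g⁻¹ * k), inner_zero_right]
          intro h2
          apply hg
          have := H.mul_mem hk (H.inv_mem h2)
          simpa using this
        · rw [hξ2 p k hk, inner_zero_left]
      simp only [this, tsum_zero]
    simp only [this]
    exact tendsto_const_nhds
  · exact ge_of_tendsto' (hlim _) fun p => vst_pos _ _

end Phi


section Transfer

theorem cstar_decomp {A : Type*} [CStarAlgebra A] (b : A) (hb : IsSelfAdjoint b) :
    ∃ r s : A, IsSelfAdjoint r ∧ r * b * r = -(star s * s) ∧ star s * s = r * r * r ∧
      (r = 0 → ∃ c, b = star c * c) := by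
  letI : PartialOrder A := CStarAlgebra.spectralOrder A
  haveI : StarOrderedRing A := CStarAlgebra.spectralOrderedRing A
  have h0 : 0 ≤ b⁻ := CFC.negPart_nonneg b
  have hr : IsSelfAdjoint b⁻ := h0.isSelfAdjoint
  have hs : IsSelfAdjoint (CFC.sqrt b⁻) := (CFC.sqrt_nonneg b⁻).isSelfAdjoint
  have hss : CFC.sqrt b⁻ * CFC.sqrt b⁻ = b⁻ := CFC.sqrt_mul_sqrt_self b⁻ h0
  have h3 : star (CFC.sqrt b⁻ * b⁻) * (CFC.sqrt b⁻ * b⁻) = b⁻ * b⁻ * b⁻ := by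
    rw [star_mul, hs.star_eq, hr.star_eq]
    calc _ = b⁻ * (CFC.sqrt b⁻ * CFC.sqrt b⁻) * b⁻ := by noncomm_ring
      _ = _ := by rw [hss]
  refine ⟨b⁻, CFC.sqrt b⁻ * b⁻, hr, ?_, h3, fun hz => ?_⟩
  · rw [h3]
    have e : b⁻ * b * b⁻ = b⁻ * (b⁺ - b⁻) * b⁻ := by rw [CFC.posPart_sub_negPart b hb]
    rw [e, mul_sub, CFC.negPart_mul_posPart]
    noncomm_ring
  · have hbn : 0 ≤ b := (CFC.negPart_eq_zero_iff b hb).1 hz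
    refine ⟨CFC.sqrt b, ?_⟩
    rw [(CFC.sqrt_nonneg b).isSelfAdjoint.star_eq, CFC.sqrt_mul_sqrt_self b hbn]

theorem simple_zero (hs : IsCstarSimple G) (φ : WeakDual ℂ (redCstar G)) (h1 : φ 1 = 1)
    (a : redCstar G) (ha : ∀ x z, φ (x * a * z) = 0) : a = 0 := by
  let J : TwoSidedIdeal (redCstar G) := TwoSidedIdeal.mk' {a | ∀ x z, φ (x * a * z) = 0}
    (fun x z => by rw [mul_zero, zero_mul, map_zero])
    (fun {a b} ha hb x z => by rw [mul_add, add_mul, map_add, ha, hb, add_zero])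
    (fun {a} ha x z => by rw [mul_neg, neg_mul, map_neg, ha, neg_zero])
    (fun {b a} ha x z => by rw [← mul_assoc, ha])
    (fun {a b} ha x z => by rw [← mul_assoc, mul_assoc, ha])
  have hJ : IsClosed (J : Set (redCstar G)) := by
    rw [TwoSidedIdeal.coe_mk']
    have : {a : redCstar G | ∀ x z, φ (x * a * z) = 0} =
        ⋂ x : redCstar G, ⋂ z : redCstar G, {a | φ (x * a * z) = 0} := by
      ext a; simp
    rw [this]
    refine isClosed_iInter fun x => isClosed_iInter fun z => ?_
    exact isClosed_eq ((map_continuous φ).comp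
      ((continuous_const.mul continuous_id).mul continuous_const)) continuous_const
  have hmem : ∀ a, a ∈ J ↔ ∀ x z, φ (x * a * z) = 0 := fun a => TwoSidedIdeal.mem_mk' _ _ _ _ _ _ _
  rcases hs J hJ with h | h
  · have : a ∈ J := (hmem a).2 ha
    rw [h, TwoSidedIdeal.mem_bot] at this
    exact this
  · have : (1 : redCstar G) ∈ J := by rw [h]; trivial
    have := (hmem 1).1 this 1 1
    rw [mul_one, mul_one, h1] at this
    exact absurd this one_ne_zero

theorem pos_transfer (hs : IsCstarSimple G) (φ : WeakDual ℂ (redCstar G)) (h1 : φ 1 = 1)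
    (hpos : ∀ a, 0 ≤ φ (star a * a)) (b : redCstar G) (hb : IsSelfAdjoint b)
    (h : ∀ x, 0 ≤ (φ (star x * b * x)).re) : 0 ≤ (tau G b).re := by
  obtain ⟨r, s, hr, hrb, hss, hc⟩ := cstar_decomp b hb
  have hq : ∀ y, φ (star y * (star s * s) * y) = 0 := by
    intro y
    have e1 : 0 ≤ (φ (-(star y * (star s * s) * y))).re := by
      have := h (r * y)
      rw [star_mul, hr.star_eq] at this
      have e : star y * r * b * (r * y) = -(star y * (star s * s) * y) := by
        calc _ = star y * (r * b * r) * y := by noncomm_ring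
          _ = _ := by rw [hrb]; noncomm_ring
      rwa [e] at this
    have e2 : 0 ≤ φ (star y * (star s * s) * y) := by
      have := hpos (s * y)
      rw [star_mul] at this
      have e : star y * star s * (s * y) = star y * (star s * s) * y := by noncomm_ring
      rwa [e] at this
    rw [map_neg, Complex.neg_re] at e1
    rw [Complex.le_def] at e2
    refine Complex.ext ?_ e2.2.symm
    have := e2.1
    simp only [Complex.zero_re] at this ⊢
    linarith
  have hz : star s * s = 0 := by
    refine simple_zero hs φ h1 _ fun x z => ?_
    set q := star s * s
    have a1 : φ (x * q * z) + φ (star z * q * star x) = 0 := by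
      have := hq (star x + z)
      rw [star_add, star_star, add_mul, add_mul, mul_add, mul_add, map_add, map_add, map_add] at this
      have b1 := hq (star x)
      have b2 := hq z
      rw [star_star] at b1
      rw [b1, b2] at this
      simpa using this
    have a2 : φ (x * q * z) - φ (star z * q * star x) = 0 := by
      have := hq (star x + Complex.I • z)
      rw [star_add, star_star, add_mul, add_mul, mul_add, mul_add, map_add, map_add, map_add] at this
      have b1 := hq (star x)
      have b2 := hq (Complex.I • z)
      rw [star_star] at b1
      rw [b1, b2, star_smul, mul_smul_comm, smul_mul_assoc, smul_mul_assoc, _root_.map_smul,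
        _root_.map_smul] at this
      simp only [Complex.star_def, Complex.conj_I, smul_eq_mul, zero_add, add_zero] at this
      have h2 : Complex.I * (φ (x * q * z) - φ (star z * q * star x)) = 0 := by
        rw [← this]; ring
      exact (mul_eq_zero.1 h2).resolve_left Complex.I_ne_zero
    linear_combination (a1 + a2) / 2
  have hr3 : r * r * r = 0 := by rw [← hss, hz]
  have hr2 : r * r = 0 := by
    have : star (r * r) * (r * r) = 0 := by
      rw [star_mul, hr.star_eq, ← mul_assoc, hr3, zero_mul]
    exact CStarRing.star_mul_self_eq_zero_iff _ |>.1 this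
  have hr0 : r = 0 := by
    refine CStarRing.star_mul_self_eq_zero_iff _ |>.1 ?_
    rw [hr.star_eq, hr2]
  obtain ⟨c, rfl⟩ := hc hr0
  exact (Complex.le_def.1 (tau_pos c)).1

end Transfer


section TopFree

theorem span_rep {X : Type*} [MulAction G X] (y₀ : X) (φ : WeakDual ℂ (redCstar G))
    (hφ1 : ∀ g : G, g • y₀ = y₀ → φ (uu g) = 1) (hφ0 : ∀ g : G, g • y₀ ≠ y₀ → φ (uu g) = 0)
    (x : redCstar G) (hx : x ∈ Submodule.span ℂ (Set.range (uu (G := G)))) :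
    ∃ ξ : X → ℂ, ∀ g : G, HasSum (fun q => star (ξ q) * ξ (g⁻¹ • q)) (φ (star x * uu g * x)) := by
  classical
  obtain ⟨c, rfl⟩ := Finsupp.mem_span_range_iff_exists_finsupp.1 hx
  refine ⟨fun q => ∑ j ∈ c.support, c j * (if j • y₀ = q then 1 else 0), fun g => ?_⟩
  have e1 : star (c.sum fun i a => a • uu i) * uu g * (c.sum fun i a => a • uu i) =
      ∑ j ∈ c.support, ∑ k ∈ c.support, (star (c j) * c k) • uu (j⁻¹ * g * k) := by
    rw [Finsupp.sum, star_sum, Finset.sum_mul, Finset.sum_mul_sum]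
    refine Finset.sum_congr rfl fun j _ => Finset.sum_congr rfl fun k _ => ?_
    rw [star_smul, uu_star, uu_mul, uu_mul, smul_mul_assoc, smul_mul_assoc, mul_smul_comm, smul_smul]
  rw [e1, map_sum]
  have e2 : (fun q => star (∑ j ∈ c.support, c j * (if j • y₀ = q then (1 : ℂ) else 0)) *
      ∑ j ∈ c.support, c j * (if j • y₀ = g⁻¹ • q then (1 : ℂ) else 0)) = fun q =>
      ∑ j ∈ c.support, ∑ k ∈ c.support, (star (c j) * c k) *
        ((if j • y₀ = q then (1 : ℂ) else 0) * (if k • y₀ = g⁻¹ • q then (1 : ℂ) else 0)) := by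
    funext q
    rw [star_sum, Finset.sum_mul_sum]
    refine Finset.sum_congr rfl fun j _ => Finset.sum_congr rfl fun k _ => ?_
    rw [star_mul']
    split_ifs <;> simp
  rw [e2]
  refine hasSum_sum fun j _ => ?_
  rw [map_sum]
  refine hasSum_sum fun k _ => ?_
  rw [_root_.map_smul, smul_eq_mul]
  refine HasSum.mul_left _ ?_
  have e3 : φ (uu (j⁻¹ * g * k)) = (if j • y₀ = j • y₀ then (1 : ℂ) else 0) *
      (if k • y₀ = g⁻¹ • j • y₀ then (1 : ℂ) else 0) := by
    rw [if_pos rfl, one_mul]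
    by_cases h : k • y₀ = g⁻¹ • j • y₀
    · rw [if_pos h]
      refine hφ1 _ ?_
      rw [mul_smul, h, mul_smul, smul_inv_smul, inv_smul_smul]
    · rw [if_neg h]
      refine hφ0 _ fun h' => h ?_
      rw [mul_smul, mul_smul, inv_smul_eq_iff] at h'
      rw [← h', inv_smul_smul]
  rw [e3]
  refine hasSum_single (j • y₀) fun q hq => ?_
  rw [if_neg (Ne.symm hq), zero_mul]

theorem term_ineq (a b : ℂ) : ‖a‖ ^ 2 - (star a * b).re ≤ 3 / 2 * ‖a‖ ^ 2 + 1 / 2 * ‖b‖ ^ 2 := by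
  have h1 : |(star a * b).re| ≤ ‖a‖ * ‖b‖ := by
    refine (Complex.abs_re_le_norm _).trans ?_
    rw [norm_mul, norm_star]
  have := abs_le.1 h1
  nlinarith [sq_nonneg (‖a‖ - ‖b‖)]

/-- the basic estimate for one group element -/
theorem one_est {X : Type*} [MulAction G X] (ξ : X → ℂ) (σ : G) (w : X → ℝ)
    (hw0 : ∀ q, 0 ≤ w q) (hw1 : ∀ q, w q ≤ 1) (hwσ : ∀ q, w q ≠ 0 → σ • q = q)
    (N W : ℝ) (z : ℂ) (hN : HasSum (fun q => ‖ξ q‖ ^ 2) N)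
    (hW : HasSum (fun q => w q * ‖ξ q‖ ^ 2) W)
    (hz : HasSum (fun q => star (ξ q) * ξ (σ⁻¹ • q)) z) : 2 * W - N ≤ z.re := by
  have hzr : HasSum (fun q => (star (ξ q) * ξ (σ⁻¹ • q)).re) z.re := Complex.hasSum_re hz
  have h1 := hN.sub hzr
  have h2 := hN.sub hW
  have h3 : HasSum (fun q => ‖ξ (σ⁻¹ • q)‖ ^ 2 - w (σ⁻¹ • q) * ‖ξ (σ⁻¹ • q)‖ ^ 2) (N - W) :=
    (MulAction.toPerm (σ⁻¹) : Equiv.Perm X).hasSum_iff.2 h2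
  have h4 := (h2.mul_left (3 / 2)).add (h3.mul_left (1 / 2))
  have := hasSum_le (fun q => ?_) h1 h4
  · linarith
  · by_cases hq : w q = 0
    · have hq' : w (σ⁻¹ • q) = 0 := by
        by_contra hne
        have := hwσ _ hne
        rw [smul_inv_smul] at this
        rw [← this] at hne
        exact hne hq
      rw [hq, hq']
      have := term_ineq (ξ q) (ξ (σ⁻¹ • q))
      linarith
    · have hfix : σ⁻¹ • q = q := by rw [inv_smul_eq_iff, hwσ q hq]
      rw [hfix]
      have e : (star (ξ q) * ξ q).re = ‖ξ q‖ ^ 2 := by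
        rw [Complex.star_def, ← Complex.normSq_eq_conj_mul_self, Complex.ofReal_re,
          Complex.normSq_eq_norm_sq]
      rw [e]
      nlinarith [sq_nonneg ‖ξ q‖, hw1 q, mul_nonneg (sub_nonneg.2 (hw1 q)) (sq_nonneg ‖ξ q‖)]

theorem dense_nonneg (φ : WeakDual ℂ (redCstar G)) (b : redCstar G)
    (hspan : ∀ x ∈ Submodule.span ℂ (Set.range (uu (G := G))), 0 ≤ (φ (star x * b * x)).re)
    (x : redCstar G) : 0 ≤ (φ (star x * b * x)).re := by
  have h0 : Continuous fun x : redCstar G => star x :=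
    continuous_star
  have h1 : Continuous fun x : redCstar G => star x * b := h0.mul continuous_const
  have h2 : Continuous fun x : redCstar G => star x * b * x := h1.mul continuous_id
  have h3 : Continuous fun x : redCstar G => φ (star x * b * x) := (map_continuous φ).comp h2
  have hc : Continuous fun x : redCstar G => (φ (star x * b * x)).re :=
    Complex.continuous_re.comp h3
  have hcl : IsClosed {x : redCstar G | 0 ≤ (φ (star x * b * x)).re} :=
    isClosed_le continuous_const hc
  have h1 := closure_minimal (s := (Submodule.span ℂ (Set.range (uu (G := G))) :
    Set (redCstar G))) (fun x hx => hspan x hx) hcl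
  exact h1 (span_dense x)

theorem topfree (hs : IsCstarSimple G) {X : Type*} [TopologicalSpace X] [CompactSpace X] [T2Space X]
    [MulAction G X] (hP : PropP G X) (y₀ : X) (φ : WeakDual ℂ (redCstar G))
    (hφ1 : ∀ g : G, g • y₀ = y₀ → φ (uu g) = 1) (hφ0 : ∀ g : G, g • y₀ ≠ y₀ → φ (uu g) = 0)
    (hpos : ∀ a, 0 ≤ φ (star a * a)) (g : G) (hg : g ≠ 1) (U : Set X) (hU : IsOpen U)
    (hfix : ∀ z ∈ U, g • z = z) : U = ∅ := by
  classical
  by_contra hne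
  obtain ⟨x₀, hx₀⟩ := Set.nonempty_iff_ne_empty.2 hne
  obtain ⟨f, hf0, hf1, hf01⟩ := exists_continuous_zero_one_of_isClosed (hU.isClosed_compl)
    (isClosed_singleton (x := x₀)) (Set.disjoint_singleton_right.2 fun h => h hx₀)
  obtain ⟨ι, T, w, s, hw, hw1, hlt⟩ := hP f x₀ (3 / 4) (by
    rw [hf1 rfl]; norm_num)
  have hone : φ 1 = 1 := by rw [← uu_one]; exact hφ1 1 (one_smul _ _)
  let b : redCstar G := ∑ i ∈ T, (w i : ℂ) • (uu ((s i)⁻¹ * g * s i) + uu ((s i)⁻¹ * g * s i)⁻¹) - 1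
  have hb : IsSelfAdjoint b := by
    show star b = b
    simp only [b]
    rw [star_sub, star_one, star_sum]
    congr 1
    refine Finset.sum_congr rfl fun i _ => ?_
    rw [star_smul, star_add, uu_star, uu_star, inv_inv, Complex.star_def, Complex.conj_ofReal,
      add_comm]
  have hτ : tau G b = -1 := by
    simp only [b]
    rw [map_sub, map_sum, tau_one, Finset.sum_eq_zero, zero_sub]
    intro i _
    have hne : (s i)⁻¹ * g * s i ≠ 1 := by
      intro h
      apply hg
      have : g = s i * ((s i)⁻¹ * g * s i) * (s i)⁻¹ := by group
      rw [this, h]; group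
    rw [_root_.map_smul, map_add, tau_uu, tau_uu, if_neg hne, if_neg (inv_ne_one.2 hne), add_zero,
      smul_zero]
  have hspan : ∀ x ∈ Submodule.span ℂ (Set.range (uu (G := G))), 0 ≤ (φ (star x * b * x)).re := by
    intro x hx
    obtain ⟨ξ, hξ⟩ := span_rep y₀ φ hφ1 hφ0 x hx
    have hN : HasSum (fun q => ‖ξ q‖ ^ 2) (φ (star x * x)).re := by
      have h1 := Complex.hasSum_re (hξ 1)
      rw [uu_one, mul_one] at h1
      refine h1.congr_fun ?_ 
      intro q
      rw [inv_one, one_smul, Complex.star_def, ← Complex.normSq_eq_conj_mul_self, Complex.ofReal_re,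
          Complex.normSq_eq_norm_sq]
    set N := (φ (star x * x)).re
    have hWs : ∀ i, Summable fun q => f (s i • q) * ‖ξ q‖ ^ 2 := fun i =>
      Summable.of_nonneg_of_le (fun q => mul_nonneg (hf01 _).1 (sq_nonneg _))
        (fun q => mul_le_of_le_one_left (sq_nonneg _) (hf01 _).2) hN.summable
    have hW : 3 / 4 * N ≤ ∑ i ∈ T, w i * ∑' q, f (s i • q) * ‖ξ q‖ ^ 2 := by
      refine hasSum_le (fun q => ?_) (hN.mul_left (3 / 4))
        (hasSum_sum fun i _ => (hWs i).hasSum.mul_left (w i))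
      simp only [← mul_assoc]
      rw [← Finset.sum_mul]
      exact mul_le_mul_of_nonneg_right (hlt q).le (sq_nonneg _)
    have hσ : ∀ i q, f (s i • q) ≠ 0 → ((s i)⁻¹ * g * s i) • q = q := by
      intro i q hq
      have : s i • q ∈ U := by
        by_contra h
        exact hq (hf0 h)
      rw [mul_smul, mul_smul, hfix _ this, inv_smul_smul]
    have hσ' : ∀ i q, f (s i • q) ≠ 0 → ((s i)⁻¹ * g * s i)⁻¹ • q = q := by
      intro i q hq
      rw [inv_smul_eq_iff, hσ i q hq]
    have hE : (φ (star x * b * x)).re = ∑ i ∈ T, w i *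
        ((φ (star x * uu ((s i)⁻¹ * g * s i) * x)).re +
          (φ (star x * uu ((s i)⁻¹ * g * s i)⁻¹ * x)).re) - N := by
      have : star x * b * x = ∑ i ∈ T, (w i : ℂ) • (star x * uu ((s i)⁻¹ * g * s i) * x +
          star x * uu ((s i)⁻¹ * g * s i)⁻¹ * x) - star x * x := by
        simp only [b]
        rw [mul_sub, sub_mul, mul_one, Finset.mul_sum, Finset.sum_mul]
        congr 1
        refine Finset.sum_congr rfl fun i _ => ?_
        rw [mul_smul_comm, smul_mul_assoc, mul_add, add_mul]
      rw [this, map_sub, map_sum, Complex.sub_re, Complex.re_sum]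
      congr 1
      refine Finset.sum_congr rfl fun i _ => ?_
      rw [_root_.map_smul, smul_eq_mul, Complex.re_ofReal_mul, map_add, Complex.add_re]
    rw [hE]
    have hF : ∑ i ∈ T, w i * (4 * (∑' q, f (s i • q) * ‖ξ q‖ ^ 2) - 2 * N) ≤ ∑ i ∈ T, w i *
        ((φ (star x * uu ((s i)⁻¹ * g * s i) * x)).re +
          (φ (star x * uu ((s i)⁻¹ * g * s i)⁻¹ * x)).re) := by
      refine Finset.sum_le_sum fun i hi => mul_le_mul_of_nonneg_left ?_ (hw i hi)
      have a1 := one_est ξ _ (fun q => f (s i • q)) (fun q => (hf01 _).1) (fun q => (hf01 _).2)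
        (hσ i) N _ _ hN (hWs i).hasSum (hξ _)
      have a2 := one_est ξ _ (fun q => f (s i • q)) (fun q => (hf01 _).1) (fun q => (hf01 _).2)
        (hσ' i) N _ _ hN (hWs i).hasSum (hξ _)
      linarith
    have hG : ∑ i ∈ T, w i * (4 * (∑' q, f (s i • q) * ‖ξ q‖ ^ 2) - 2 * N) =
        4 * (∑ i ∈ T, w i * ∑' q, f (s i • q) * ‖ξ q‖ ^ 2) - 2 * N := by
      have : 2 * N = ∑ i ∈ T, w i * (2 * N) := by rw [← Finset.sum_mul, hw1, one_mul]
      conv_rhs => rw [this]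
      rw [Finset.mul_sum, ← Finset.sum_sub_distrib]
      refine Finset.sum_congr rfl fun i _ => by ring
    linarith
  have hall := dense_nonneg φ b hspan
  have := pos_transfer hs φ hone hpos b hb hall
  rw [hτ] at this
  norm_num at this

end TopFree


section Averaging

theorem opNorm_of_form {a : ℓ²(G, ℂ) →L[ℂ] ℓ²(G, ℂ)} {M : ℝ} (hM : 0 ≤ M)
    (h : ∀ ξ η : ℓ²(G, ℂ), ‖inner ℂ η (a ξ)‖ ≤ M * (‖ξ‖ ^ 2 + ‖η‖ ^ 2)) : ‖a‖ ≤ 2 * M := by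
  refine ContinuousLinearMap.opNorm_le_bound _ (by positivity) fun ξ => ?_
  by_cases h0 : a ξ = 0
  · rw [h0, norm_zero]; positivity
  have hξ : ξ ≠ 0 := fun e => h0 (by rw [e, map_zero])
  have p1 : 0 < ‖a ξ‖ := norm_pos_iff.2 h0
  have p2 : 0 < ‖ξ‖ := norm_pos_iff.2 hξ
  have h1 := h ξ (((‖ξ‖ / ‖a ξ‖ : ℝ) : ℂ) • a ξ)
  rw [inner_smul_left, inner_self_eq_norm_sq_to_K, norm_mul, norm_smul, Complex.conj_ofReal,
    Complex.norm_real, Real.norm_of_nonneg (by positivity), norm_pow] at h1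
  have e1 : ‖((‖a ξ‖ : ℝ) : ℂ)‖ = ‖a ξ‖ := by
    rw [Complex.norm_real, Real.norm_of_nonneg p1.le]
  have e2 : ‖ξ‖ / ‖a ξ‖ * ‖a ξ‖ = ‖ξ‖ := by field_simp
  have e3 : ‖ξ‖ / ‖a ξ‖ * ‖a ξ‖ ^ 2 = ‖ξ‖ * ‖a ξ‖ := by field_simp
  rw [e2] at h1
  have h2 : ‖ξ‖ * ‖a ξ‖ ≤ M * (‖ξ‖ ^ 2 + ‖ξ‖ ^ 2) := by
    rw [← e3]
    refine le_trans (le_of_eq ?_) h1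
    congr 2
    exact e1.symm
  have h3 : ‖ξ‖ * ‖a ξ‖ ≤ ‖ξ‖ * (2 * M * ‖ξ‖) := by linarith
  exact le_of_mul_le_mul_left h3 p2

theorem pw_ineq (ε p q u v : ℝ) (hε : 0 < ε) (hu : u ≤ 1) (hv : v ≤ 1) (huv : u * v = 0) :
    p * q ≤ 1 / 2 * (ε * p ^ 2 + ε * q ^ 2 + (p ^ 2 - u * p ^ 2) / ε + (q ^ 2 - v * q ^ 2) / ε) := by
  have key : ∀ a b : ℝ, a * b ≤ 1 / 2 * (a ^ 2 / ε + ε * b ^ 2) := by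
    intro a b
    have : 0 ≤ (a - ε * b) ^ 2 / ε := by positivity
    have e : (a - ε * b) ^ 2 / ε = a ^ 2 / ε - 2 * a * b + ε * b ^ 2 := by
      field_simp
      ring
    linarith
  rcases mul_eq_zero.1 huv with h | h
  · subst h
    have h1 := key p q
    have h2 : 0 ≤ (q ^ 2 - v * q ^ 2) / ε := by
      have : 0 ≤ (1 - v) * q ^ 2 := mul_nonneg (by linarith) (sq_nonneg q)
      have : 0 ≤ q ^ 2 - v * q ^ 2 := by linarith
      positivity
    have h3 : 0 ≤ ε * p ^ 2 := by positivity
    rw [zero_mul, sub_zero]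
    linarith
  · subst h
    have h1 := key q p
    have h2 : 0 ≤ (p ^ 2 - u * p ^ 2) / ε := by
      have : 0 ≤ (1 - u) * p ^ 2 := mul_nonneg (by linarith) (sq_nonneg p)
      have : 0 ≤ p ^ 2 - u * p ^ 2 := by linarith
      positivity
    have h3 : 0 ≤ ε * q ^ 2 := by positivity
    rw [zero_mul, sub_zero]
    linarith

/-- weighted mass of a vector -/
def wmass (w : G → ℝ) (ξ : ℓ²(G, ℂ)) : ℝ := ∑' k, w k * ‖ξ k‖ ^ 2

theorem wmass_hasSum (w : G → ℝ) (h0 : ∀ k, 0 ≤ w k) (h1 : ∀ k, w k ≤ 1) (ξ : ℓ²(G, ℂ)) :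
    HasSum (fun k => w k * ‖ξ k‖ ^ 2) (wmass w ξ) :=
  (Summable.of_nonneg_of_le (fun q => mul_nonneg (h0 _) (sq_nonneg _))
        (fun q => mul_le_of_le_one_left (sq_nonneg _) (h1 _)) (hasSum_sq ξ).summable).hasSum

theorem inner_est (ε : ℝ) (hε : 0 < ε) (σ : G) (w : G → ℝ) (h0 : ∀ k, 0 ≤ w k) (h1 : ∀ k, w k ≤ 1)
    (hw : ∀ k, w k * w (σ⁻¹ * k) = 0) (ξ η : ℓ²(G, ℂ)) :
    ‖inner ℂ η (lreg σ ξ)‖ ≤ 1 / 2 * (ε * ‖η‖ ^ 2 + ε * ‖ξ‖ ^ 2 + (‖η‖ ^ 2 - wmass w η) / ε +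
      (‖ξ‖ ^ 2 - wmass w ξ) / ε) := by
  have s1 := hasSum_sq η
  have s2 : HasSum (fun k => ‖ξ (σ⁻¹ * k)‖ ^ 2) (‖ξ‖ ^ 2) :=
    (Equiv.mulLeft σ⁻¹).hasSum_iff.2 (hasSum_sq ξ)
  have s3 := wmass_hasSum w h0 h1 η
  have s4 : HasSum (fun k => w (σ⁻¹ * k) * ‖ξ (σ⁻¹ * k)‖ ^ 2) (wmass w ξ) :=
    (Equiv.mulLeft σ⁻¹).hasSum_iff.2 (wmass_hasSum w h0 h1 ξ)
  have s5 := ((((s1.mul_left ε).add (s2.mul_left ε)).add ((s1.sub s3).div_const ε)).add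
    ((s2.sub s4).div_const ε)).mul_left (1 / 2)
  refine HasSum.norm_le_of_bounded (lp.hasSum_inner η (lreg σ ξ)) s5 fun k => ?_
  rw [lreg_apply]
  refine (norm_inner_le_norm _ _).trans ?_
  exact pw_ineq ε _ _ _ _ hε (h1 _) (h1 _) (hw k)

theorem wmass_avg {ι : Type} (T : Finset ι) (w : ι → ℝ) (W : ι → G → ℝ) (c : ℝ)
    (h0 : ∀ i k, 0 ≤ W i k) (h1 : ∀ i k, W i k ≤ 1)
    (hlt : ∀ k, c ≤ ∑ i ∈ T, w i * W i k) (ξ : ℓ²(G, ℂ)) :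
    c * ‖ξ‖ ^ 2 ≤ ∑ i ∈ T, w i * wmass (W i) ξ := by
  refine hasSum_le (fun q => ?_) ((hasSum_sq ξ).mul_left c)
        (hasSum_sum fun i _ => (wmass_hasSum (W i) (h0 i) (h1 i) ξ).mul_left (w i))
  simp only [← mul_assoc]
  rw [← Finset.sum_mul]
  exact mul_le_mul_of_nonneg_right (hlt q) (sq_nonneg _)

theorem avg_norm {ι : Type} (T : Finset ι) (w : ι → ℝ) (hw : ∀ i ∈ T, 0 ≤ w i)
    (hw1 : ∑ i ∈ T, w i = 1) (W : ι → G → ℝ) (ε : ℝ) (hε : 0 < ε)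
    (h0 : ∀ i k, 0 ≤ W i k) (h1 : ∀ i k, W i k ≤ 1)
    (hlt : ∀ k, 1 - ε ^ 2 ≤ ∑ i ∈ T, w i * W i k) (F : Finset G) (σ : ι → G → G)
    (hσ : ∀ i, ∀ g ∈ F, ∀ k, W i k * W i ((σ i g)⁻¹ * k) = 0) (θ : ι → G → ℂ)
    (hθ : ∀ i g, ‖θ i g‖ ≤ 1) :
    ‖∑ i ∈ T, (w i : ℂ) • ∑ g ∈ F, θ i g • uu (σ i g)‖ ≤ 2 * (F.card * ε) := by
  rw [← coe_norm_eq]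
  refine opNorm_of_form (by positivity) fun ξ η => ?_
  have e : ((∑ i ∈ T, (w i : ℂ) • ∑ g ∈ F, θ i g • uu (σ i g) : redCstar G) :
      ℓ²(G, ℂ) →L[ℂ] ℓ²(G, ℂ)) = ∑ i ∈ T, (w i : ℂ) • ∑ g ∈ F, θ i g • lreg (σ i g) := by
    push_cast
    simp only [uu_coe]
  rw [e, ContinuousLinearMap.sum_apply, inner_sum]
  set R : ι → ℝ := fun i => 1 / 2 * (ε * ‖η‖ ^ 2 + ε * ‖ξ‖ ^ 2 + (‖η‖ ^ 2 - wmass (W i) η) / ε +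
      (‖ξ‖ ^ 2 - wmass (W i) ξ) / ε) with hR
  have step : ∀ i ∈ T, ‖inner ℂ η (((w i : ℂ) • ∑ g ∈ F, θ i g • lreg (σ i g)) ξ)‖ ≤
      w i * (F.card * R i) := by
    intro i hi
    rw [ContinuousLinearMap.smul_apply, inner_smul_right, norm_mul, Complex.norm_real,
      Real.norm_of_nonneg (hw i hi)]
    refine mul_le_mul_of_nonneg_left ?_ (hw i hi)
    rw [ContinuousLinearMap.sum_apply, inner_sum, ← nsmul_eq_mul]
    refine (norm_sum_le _ _).trans (Finset.sum_le_card_nsmul _ _ _ fun g hg => ?_)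
    rw [ContinuousLinearMap.smul_apply, inner_smul_right, norm_mul]
    refine (mul_le_of_le_one_left (norm_nonneg _) (hθ i g)).trans ?_
    exact inner_est ε hε (σ i g) (W i) (h0 i) (h1 i) (hσ i g hg) ξ η
  refine (norm_sum_le_of_le T step).trans ?_
  have a1 := wmass_avg T w W _ h0 h1 hlt ξ
  have a2 := wmass_avg T w W _ h0 h1 hlt η
  have e2 : ∑ i ∈ T, w i * R i = 1 / 2 * (ε * ‖η‖ ^ 2 + ε * ‖ξ‖ ^ 2 +
      (‖η‖ ^ 2 - ∑ i ∈ T, w i * wmass (W i) η) / ε +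
      (‖ξ‖ ^ 2 - ∑ i ∈ T, w i * wmass (W i) ξ) / ε) := by
    have : ∀ i, w i * R i = w i * (1 / 2 * (ε * ‖η‖ ^ 2 + ε * ‖ξ‖ ^ 2 + ‖η‖ ^ 2 / ε +
      ‖ξ‖ ^ 2 / ε)) - (1 / (2 * ε)) * (w i * wmass (W i) η) -
        (1 / (2 * ε)) * (w i * wmass (W i) ξ) := by
      intro i
      rw [hR]
      field_simp
      ring
    simp only [this]
    rw [Finset.sum_sub_distrib, Finset.sum_sub_distrib, ← Finset.sum_mul, hw1, ← Finset.mul_sum,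
      ← Finset.mul_sum]
    field_simp
    ring
  have e3 : ∑ i ∈ T, w i * (F.card * R i) = F.card * ∑ i ∈ T, w i * R i := by
    rw [Finset.mul_sum]
    exact Finset.sum_congr rfl fun i _ => by ring
  rw [e3, mul_assoc]
  refine mul_le_mul_of_nonneg_left ?_ (Nat.cast_nonneg _)
  rw [e2]
  have b1 : (‖η‖ ^ 2 - ∑ i ∈ T, w i * wmass (W i) η) / ε ≤ ε * ‖η‖ ^ 2 := by
    rw [div_le_iff₀ hε]; linarith
  have b2 : (‖ξ‖ ^ 2 - ∑ i ∈ T, w i * wmass (W i) ξ) / ε ≤ ε * ‖ξ‖ ^ 2 := by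
    rw [div_le_iff₀ hε]; linarith
  linarith

theorem exists_pt {X : Type*} [TopologicalSpace X] [CompactSpace X] [T2Space X] [Nonempty X]
    [MulAction G X] [ContinuousConstSMul G X]
    (htf : ∀ g : G, g ≠ 1 → ∀ U : Set X, IsOpen U → (∀ z ∈ U, g • z = z) → U = ∅)
    (F : Finset G) (hF : ∀ g ∈ F, g ≠ 1) :
    ∃ (z : X) (f : C(X, ℝ)), f z = 1 ∧ (∀ x, 0 ≤ f x) ∧ (∀ x, f x ≤ 1) ∧
      ∀ g ∈ F, ∀ x, f x * f (g⁻¹ • x) = 0 := by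
  have ho : ∀ g : G, IsOpen {z : X | g • z ≠ z} := fun g =>
    isOpen_ne_fun (continuous_const_smul g) continuous_id
  have hd : Dense (⋂ g ∈ (F : Set G), {z : X | g • z ≠ z}) := by
    refine dense_biInter_of_isOpen (fun g _ => ho g) F.countable_toSet fun g hg => ?_
    rw [← compl_compl {z : X | g • z ≠ z}, ← interior_eq_empty_iff_dense_compl]
    refine htf g (hF g hg) _ isOpen_interior fun z hz => ?_
    by_contra h
    exact interior_subset hz h
  obtain ⟨z, hz⟩ := hd.nonempty
  have hz' : ∀ g ∈ F, g • z ≠ z := fun g hg => Set.mem_iInter₂.1 hz g hg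
  have hsep : ∀ g : G, ∃ A B : Set X, g ∈ F → IsOpen A ∧ IsOpen B ∧ z ∈ A ∧ g • z ∈ B ∧
      Disjoint A B := by
    intro g
    by_cases hg : g ∈ F
    · obtain ⟨A, B, h⟩ := t2_separation (hz' g hg).symm
      exact ⟨A, B, fun _ => h⟩
    · exact ⟨∅, ∅, fun h => absurd h hg⟩
  choose A B hAB using hsep
  let U : Set X := ⋂ g ∈ F, (A g ∩ (fun x => g • x) ⁻¹' B g)
  have hU : IsOpen U := isOpen_biInter_finset fun g hg =>
    (hAB g hg).1.inter ((hAB g hg).2.1.preimage (continuous_const_smul g))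
  have hzU : z ∈ U := Set.mem_iInter₂.2 fun g hg => ⟨(hAB g hg).2.2.1, (hAB g hg).2.2.2.1⟩
  obtain ⟨f, hf0, hf1, hf01⟩ := exists_continuous_zero_one_of_isClosed (hU.isClosed_compl)
    (isClosed_singleton (x := z)) (Set.disjoint_singleton_right.2 fun h => h hzU)
  refine ⟨z, f, hf1 rfl, fun x => (hf01 x).1, fun x => (hf01 x).2, fun g hg x => ?_⟩
  by_cases h1 : x ∈ U
  · by_cases h2 : g⁻¹ • x ∈ U
    · exfalso
      have c1 := (Set.mem_iInter₂.1 h1 g hg).1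
      have c2 := (Set.mem_iInter₂.1 h2 g hg).2
      rw [Set.mem_preimage, smul_inv_smul] at c2
      exact Set.disjoint_left.1 (hAB g hg).2.2.2.2 c1 c2
    · rw [hf0 h2]; simp
  · rw [hf0 h1]; simp

theorem orbit_small {X : Type*} [TopologicalSpace X] [CompactSpace X] [T2Space X]
    [MulAction G X] [ContinuousConstSMul G X] (hP : PropP G X) (y₀ : X)
    (htf : ∀ g : G, g ≠ 1 → ∀ U : Set X, IsOpen U → (∀ z ∈ U, g • z = z) → U = ∅)
    (F : Finset G) (hF : ∀ g ∈ F, g ≠ 1) (φ : WeakDual ℂ (redCstar G)) (r : ℝ) (hr : 0 ≤ r)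
    (hφ : ∀ a, ‖φ a‖ ≤ r * ‖a‖) (ε : ℝ) (hε : 0 < ε) :
    ∃ s : G, ∀ g ∈ F, ‖φ (uu (s⁻¹ * g * s))‖ ≤ r * (2 * (F.card * ε)) := by
  haveI : Nonempty X := ⟨y₀⟩
  obtain ⟨z, f, hfz, hf0, hf1, hfg⟩ := exists_pt htf F hF
  obtain ⟨ι, T, w, s, hw, hw1, hlt⟩ := hP f z (1 - ε ^ 2) (by
    rw [hfz]; have : 0 < ε ^ 2 := by positivity
    linarith)
  let θ : ι → G → ℂ := fun i g => star (φ (uu ((s i)⁻¹ * g * s i))) /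
    (‖φ (uu ((s i)⁻¹ * g * s i))‖ : ℂ)
  have hθ : ∀ i g, ‖θ i g‖ ≤ 1 := by
    intro i g
    simp only [θ]
    rw [norm_div, norm_star, Complex.norm_real, norm_norm]
    exact div_self_le_one _
  have hθφ : ∀ i g, θ i g * φ (uu ((s i)⁻¹ * g * s i)) =
      ((‖φ (uu ((s i)⁻¹ * g * s i))‖ : ℝ) : ℂ) := by
    intro i g
    simp only [θ]
    set t := φ (uu ((s i)⁻¹ * g * s i))
    by_cases ht : t = 0
    · rw [ht]; simp
    · have : (‖t‖ : ℂ) ≠ 0 := by exact_mod_cast norm_ne_zero_iff.2 ht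
      rw [div_mul_eq_mul_div, div_eq_iff this, Complex.star_def, Complex.conj_mul']
      ring
  have hn := avg_norm T w hw hw1 (fun i k => f (s i • k • y₀)) ε hε (fun i k => hf0 _)
    (fun i k => hf1 _) (fun k => (hlt (k • y₀)).le) F (fun i g => (s i)⁻¹ * g * s i)
    (fun i g hg k => by
      have : s i • ((((s i)⁻¹ * g * s i)⁻¹ * k) • y₀) = g⁻¹ • (s i • k • y₀) := by
        simp only [← mul_smul]
        congr 1
        group
      rw [this]
      exact hfg g hg _) θ hθ
  have h2 := (hφ _).trans (mul_le_mul_of_nonneg_left hn hr)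
  have h3 : φ (∑ i ∈ T, (w i : ℂ) • ∑ g ∈ F, θ i g • uu ((s i)⁻¹ * g * s i)) =
      ((∑ i ∈ T, w i * ∑ g ∈ F, ‖φ (uu ((s i)⁻¹ * g * s i))‖ : ℝ) : ℂ) := by
    rw [map_sum, Complex.ofReal_sum]
    refine Finset.sum_congr rfl fun i _ => ?_
    rw [_root_.map_smul, map_sum, smul_eq_mul, Complex.ofReal_mul, Complex.ofReal_sum]
    congr 1
    refine Finset.sum_congr rfl fun g _ => ?_
    rw [_root_.map_smul, smul_eq_mul, hθφ]
  rw [h3, Complex.norm_real] at h2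
  have h4 := (le_abs_self _).trans h2
  by_contra hcon
  push Not at hcon
  have h5 : ∀ i, r * (2 * (F.card * ε)) < ∑ g ∈ F, ‖φ (uu ((s i)⁻¹ * g * s i))‖ := by
    intro i
    obtain ⟨g, hg, hlt'⟩ := hcon (s i)
    exact hlt'.trans_le (Finset.single_le_sum (f := fun g => ‖φ (uu ((s i)⁻¹ * g * s i))‖)
      (fun _ _ => norm_nonneg _) hg)
  have h6 : ∑ i ∈ T, w i * (∑ g ∈ F, ‖φ (uu ((s i)⁻¹ * g * s i))‖ - r * (2 * (F.card * ε))) ≤ 0 := by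
    simp only [mul_sub]
    rw [Finset.sum_sub_distrib, ← Finset.sum_mul, hw1]
    linarith
  have h7 : ∀ i ∈ T, 0 ≤ w i * (∑ g ∈ F, ‖φ (uu ((s i)⁻¹ * g * s i))‖ - r * (2 * (F.card * ε))) :=
    fun i hi => mul_nonneg (hw i hi) (sub_nonneg.2 (h5 i).le)
  have h8 := (Finset.sum_eq_zero_iff_of_nonneg h7).1 (le_antisymm h6 (Finset.sum_nonneg h7))
  have h9 : ∑ i ∈ T, w i = 0 := Finset.sum_eq_zero fun i hi =>
    (mul_eq_zero.1 (h8 i hi)).resolve_right (sub_pos.2 (h5 i)).ne'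
  rw [hw1] at h9
  exact one_ne_zero h9

end Averaging


section Conclusion

theorem fixed_unique {X : Type*} [TopologicalSpace X] [CompactSpace X] [T2Space X]
    [MeasurableSpace X] [BorelSpace X] (S : Set (ProbabilityMeasure X)) (p x : X)
    (hS : ∀ ν ∈ S, (ν : Measure X) = Measure.dirac p)
    (h : (⟨Measure.dirac x, Measure.dirac.isProbabilityMeasure⟩ : ProbabilityMeasure X) ∈
      closure S) : x = p := by
  by_contra hne
  obtain ⟨f, hf0, hf1, -⟩ := exists_continuous_zero_one_of_isClosed (isClosed_singleton (x := x))
    (isClosed_singleton (x := p)) (Set.disjoint_singleton.2 hne)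
  let F := BoundedContinuousFunction.mkOfCompact f
  have hc := ProbabilityMeasure.continuous_integral_boundedContinuousFunction F
  have hcl : IsClosed {μ : ProbabilityMeasure X | ∫ y, F y ∂(μ : Measure X) = 1} :=
    isClosed_eq hc continuous_const
  have hsub : S ⊆ {μ : ProbabilityMeasure X | ∫ y, F y ∂(μ : Measure X) = 1} := by
    intro ν hν
    show ∫ y, F y ∂(ν : Measure X) = 1
    rw [hS ν hν, integral_dirac]
    exact hf1 rfl
  have h1 := closure_minimal hsub hcl h
  have h2 : ∫ y, F y ∂(Measure.dirac x) = 1 := h1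
  rw [integral_dirac] at h2
  have h3 : F x = 0 := hf0 rfl
  rw [h3] at h2
  exact zero_ne_one h2

theorem dualAct_smul_tau (c : ℂ) (g : G) : dualAct g (c • tau G) = c • tau G := by
  classical
  refine eq_of_uu (φ := dualAct g (c • tau G)) (ψ := c • tau G) fun k => ?_
  have e : dualAct g (c • tau G) (uu k) = (c • tau G) (uu (g⁻¹ * k * g)) := dualAct_uu g k _
  have e1 : ∀ k : G, (c • tau G) (uu k) = c * tau G (uu k) := fun k => rfl
  refine e.trans ?_
  rw [e1, tau_uu]
  refine Eq.trans ?_ (e1 k).symm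
  rw [tau_uu]
  have : g⁻¹ * k * g = 1 ↔ k = 1 := by
    constructor
    · intro h
      have : k = g * (g⁻¹ * k * g) * g⁻¹ := by group
      rw [this, h]; group
    · rintro rfl; group
  simp only [this]

theorem wd_bound (φ : WeakDual ℂ (redCstar G)) : ∃ r : ℝ, 0 ≤ r ∧ ∀ a, ‖φ a‖ ≤ r * ‖a‖ :=
  ⟨‖WeakDual.toStrongDual φ‖, ContinuousLinearMap.opNorm_nonneg _,
    fun a => (WeakDual.toStrongDual φ).le_opNorm a⟩

variable (G) in
theorem exists_tf (hs : IsCstarSimple G) : ∃ (X : Type u) (_ : TopologicalSpace X)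
    (_ : CompactSpace X) (_ : T2Space X) (_ : MulAction G X) (_ : ContinuousConstSMul G X)
    (_ : X), PropP G X ∧
    ∀ g : G, g ≠ 1 → ∀ U : Set X, IsOpen U → (∀ z ∈ U, g • z = z) → U = ∅ := by
  obtain ⟨X, i1, i2, i3, ⟨y₀⟩, i5, i6, hP, hm⟩ := exists_bd G
  obtain ⟨m, hm1, hm2⟩ := hm y₀
  obtain ⟨φ₀, h1, h0, hpos⟩ := exists_phi (MulAction.stabilizer G y₀) m hm1
    (fun h hh f => hm2 h (MulAction.mem_stabilizer_iff.1 hh) f)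
  have htf := topfree hs hP y₀ φ₀ (fun g hg => h1 g (MulAction.mem_stabilizer_iff.2 hg))
    (fun g hg => h0 g fun h => hg (MulAction.mem_stabilizer_iff.1 h)) hpos
  exact ⟨X, i1, i2, i3, i5, i6, y₀, hP, htf⟩

theorem simple_small (hs : IsCstarSimple G) (φ : WeakDual ℂ (redCstar G)) :
    ∀ p : Finset G × ℕ, ∃ s : G, ∀ g ∈ p.1, g ≠ 1 →
      ‖φ (uu (s⁻¹ * g * s))‖ ≤ 1 / ((p.2 : ℝ) + 1) := by
  classical
  obtain ⟨r, hr, hφr⟩ := wd_bound φ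
  obtain ⟨X, i1, i2, i3, i5, i6, y₀, hP, htf⟩ := exists_tf G hs
  intro p
  set F := p.1.filter (· ≠ 1) with hFdef
  obtain ⟨s, hsm⟩ := orbit_small hP y₀ htf F (fun g hg => (Finset.mem_filter.1 hg).2) φ r hr
    hφr (1 / ((p.2 : ℝ) + 1) / (2 * ((r + 1) * (F.card + 1)))) (by positivity)
  refine ⟨s, fun g hg hg1 => (hsm g (Finset.mem_filter.2 ⟨hg, hg1⟩)).trans ?_⟩
  have hp : (0 : ℝ) < 1 / ((p.2 : ℝ) + 1) := by positivity
  set t := 1 / ((p.2 : ℝ) + 1)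
  have hn : (0 : ℝ) ≤ F.card := Nat.cast_nonneg _
  have e : r * (2 * (F.card * (t / (2 * ((r + 1) * (F.card + 1)))))) =
      t * ((r / (r + 1)) * (F.card / (F.card + 1))) := by
    field_simp
  rw [e]
  have a1 : r / (r + 1) ≤ 1 := by rw [div_le_one (by linarith)]; linarith
  have a2 : (F.card : ℝ) / (F.card + 1) ≤ 1 := by rw [div_le_one (by linarith)]; linarith
  refine mul_le_of_le_one_right hp.le (mul_le_one₀ a1 (by positivity) a2)

theorem trace_mem (hs : IsCstarSimple G) (B : Set (WeakDual ℂ (redCstar G))) (hBc : IsCompact B)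
    (hinv : ∀ (g : G) (φ : WeakDual ℂ (redCstar G)), φ ∈ B → dualAct g φ ∈ B)
    (φ : WeakDual ℂ (redCstar G)) (hφB : φ ∈ B) : φ 1 • tau G ∈ B := by
  classical
  have hex := simple_small hs φ
  choose s hsm using hex
  let U : Ultrafilter (Finset G × ℕ) := Ultrafilter.of Filter.atTop
  have hU : (U : Filter (Finset G × ℕ)) ≤ Filter.atTop := Ultrafilter.of_le _
  obtain ⟨ψ, hψB, hψ⟩ := hBc.ultrafilter_le_nhds' (U.map fun p => dualAct (s p) φ) (by
      rw [Ultrafilter.mem_map]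
      exact Filter.mem_of_superset Filter.univ_mem fun p _ => hinv (s p) φ hφB)
  have hlim : ∀ a, Filter.Tendsto (fun p => dualAct (s p) φ a) U (nhds (ψ a)) := fun a =>
    ((WeakDual.eval_continuous a).tendsto ψ).comp hψ
  have hψτ : ψ = φ 1 • tau G := by
    refine eq_of_uu (φ := ψ) (ψ := φ 1 • tau G) fun k => ?_
    have e1 : (φ 1 • tau G) (uu k) = φ 1 * tau G (uu k) := rfl
    refine Eq.trans ?_ e1.symm
    rw [tau_uu]
    refine tendsto_nhds_unique (hlim (uu k)) ?_
    simp only [dualAct_uu]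
    by_cases hk : k = 1
    · subst hk
      rw [if_pos rfl, mul_one]
      have : ∀ p, φ (uu ((s p)⁻¹ * 1 * s p)) = φ 1 := fun p => by
        rw [mul_one, inv_mul_cancel, uu_one]
      simp only [this]
      exact tendsto_const_nhds
    · rw [if_neg hk, mul_zero]
      refine Filter.Tendsto.mono_left ?_ hU
      rw [tendsto_zero_iff_norm_tendsto_zero]
      have hb : Filter.Tendsto (fun p : Finset G × ℕ => 1 / ((p.2 : ℝ) + 1)) Filter.atTop
          (nhds 0) := by
        have h1 := tendsto_one_div_add_atTop_nhds_zero_nat (𝕜 := ℝ)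
        rw [← Filter.prod_atTop_atTop_eq]
        exact h1.comp Filter.tendsto_snd
      refine squeeze_zero' (Filter.Eventually.of_forall fun p => norm_nonneg _) ?_ hb
      filter_upwards [Filter.eventually_ge_atTop (({k} : Finset G), 0)] with p hp
      exact hsm p k (hp.1 (Finset.mem_singleton_self k)) hk
  exact hψτ ▸ hψB

theorem forward (hs : IsCstarSimple G) (B : Set (WeakDual ℂ (redCstar G)))
    (hB : IsDualBoundary G B) : ∃ c : ℂ, B = {c • tau G} := by
  obtain ⟨⟨φ, hφB⟩, hBc, hinv, hbd⟩ := hB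
  refine ⟨φ 1, ?_⟩
  have hmem : φ 1 • tau G ∈ B := trace_mem hs B hBc hinv φ hφB
  refine Set.eq_singleton_iff_unique_mem.2 ⟨hmem, fun x hx => ?_⟩
  haveI : CompactSpace B := isCompact_iff_compactSpace.1 hBc
  letI : MeasurableSpace B := borel B
  haveI : BorelSpace B := ⟨rfl⟩
  let p : B := ⟨φ 1 • tau G, hmem⟩
  have hcl := hbd ⟨Measure.dirac p, Measure.dirac.isProbabilityMeasure⟩ ⟨x, hx⟩
  have := fixed_unique _ p ⟨x, hx⟩ (fun ν hν => ?_) hcl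
  · exact congrArg Subtype.val this
  · obtain ⟨g, rfl⟩ := hν
    have hmeas : Measurable fun y : B => (⟨dualAct g y.1, hinv g y.1 y.2⟩ : B) :=
      (((dualAct_continuous g).comp continuous_subtype_val).subtype_mk
            (fun y => hinv g y.1 y.2)).measurable
    show Measure.map (fun y : B => (⟨dualAct g y.1, hinv g y.1 y.2⟩ : B)) (Measure.dirac p) = _
    rw [Measure.map_dirac' hmeas]
    congr 1
    exact Subtype.ext (dualAct_smul_tau _ g)

end Conclusion

end Work

/-- A discrete group is C*-simple if and only if every `G`-boundary contained in the dual of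
`C*_λ(G)` is a singleton consisting of a scalar multiple of the canonical trace. -/
theorem cstarSimple_iff_boundaries_in_dual_trivial (G : Type u) [Group G] :
    IsCstarSimple G ↔
      ∀ B : Set (WeakDual ℂ (redCstar G)), IsDualBoundary G B →
        ∃ c : ℂ, B = {c • tau G} := by
  exact ⟨fun hs B hB => forward hs B hB, fun H => backward H⟩
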